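/- arXiv:1004.1326 — 3 statements merged into one kernel-verified Lean document; each statement's English description precedes it below -/
import Mathlib

section
/- Let x ∈ ℝ² have irrational slope and y ∈ ℝ² have irrational slope y₁/y₂. Then there exist infinitely many γ ∈ SL(2,ℤ) such that |γx − y| ≤ 7√5 · |x|^{1/3} |y|^{2/3} / |γ|^{1/3}. -/
open Matrix MeasureTheory

/-- Denominator `q k` of the `k`-th convergent of the continued fraction of `ξ`. -/
noncomputable def qden (ξ : ℝ) (k : ℕ) : ℝ := (GenContFract.of ξ).dens k

/-- Numerator `p k` of the `k`-th convergent of the continued fraction of `ξ`. -/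
noncomputable def pnum (ξ : ℝ) (k : ℕ) : ℝ := (GenContFract.of ξ).nums k

/-- Action of an integer matrix on `ℝ²` by left multiplication. -/
noncomputable def act (g : Matrix (Fin 2) (Fin 2) ℤ) (x : Fin 2 → ℝ) : Fin 2 → ℝ :=
  (g.map (Int.cast : ℤ → ℝ)).mulVec x

/-- Sup norm of an integer `2 × 2` matrix. -/
noncomputable def mnorm (g : Matrix (Fin 2) (Fin 2) ℤ) : ℝ :=
  max (max |(g 0 0 : ℝ)| |(g 0 1 : ℝ)|) (max |(g 1 0 : ℝ)| |(g 1 1 : ℝ)|)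

/-- Sup norm on `ℝ²`. -/
noncomputable def vnorm (v : Fin 2 → ℝ) : ℝ := max |v 0| |v 1|

/-- The set of exponents `w` such that `|v α + u| ≤ |v| ^ (-w)` has infinitely many
integer solutions `(v, u)`; its supremum is the irrationality measure `ω(α)`. -/
def omegaSet (α : ℝ) : Set ℝ :=
  {w : ℝ | {p : ℤ × ℤ | |(p.1 : ℝ) * α + (p.2 : ℝ)| ≤ |(p.1 : ℝ)| ^ (-w)}.Infinite}

/-- The set of exponents `μ` such that `|γ x - y| ≤ |γ| ^ (-μ)` for infinitely many
`γ ∈ SL(2, ℤ)`; its supremum is `μ(x, y)`. -/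
def muSet (x y : Fin 2 → ℝ) : Set ℝ :=
  {μ : ℝ | {γ : Matrix (Fin 2) (Fin 2) ℤ |
    γ.det = 1 ∧ vnorm (act γ x - y) ≤ mnorm γ ^ (-μ)}.Infinite}

/-- The set of exponents `μ` such that for all sufficiently large `T` there is
`γ ∈ SL(2, ℤ)` with `|γ| ≤ T` and `|γ x - y| ≤ T ^ (-μ)`; its supremum is `μ̂(x, y)`. -/
def muHatSet (x y : Fin 2 → ℝ) : Set ℝ :=
  {μ : ℝ | ∃ T₀ : ℝ, ∀ T : ℝ, T₀ ≤ T → ∃ γ : Matrix (Fin 2) (Fin 2) ℤ,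
    γ.det = 1 ∧ mnorm γ ≤ T ∧ vnorm (act γ x - y) ≤ T ^ (-μ)}

/-- Two consecutive integer points `(p, q)`, `(p', q')` of a continued fraction expansion of `ξ`:
they span `ℤ²`, and the linear form `q ξ - p` decreases in absolute value and changes sign. -/
def IsConsecutive (ξ : ℝ) (s : (ℤ × ℤ) × (ℤ × ℤ)) : Prop :=
  0 ≤ s.1.2 ∧ 1 ≤ s.2.2 ∧ s.1.2 ≤ s.2.2 ∧ ∃ e : ℤ, (e = 1 ∨ e = -1) ∧
    s.2.1 * s.1.2 - s.1.1 * s.2.2 = e ∧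
    (e : ℝ) * (s.2.2 * ξ - s.2.1) < 0 ∧
    0 < (e : ℝ) * (s.1.2 * ξ - s.1.1) + e * (s.2.2 * ξ - s.2.1)

lemma Irrational.int_mul_sub_ne_zero {ξ : ℝ} (hξ : Irrational ξ) {q : ℤ} (hq : q ≠ 0) (p : ℤ) :
    (q : ℝ) * ξ - p ≠ 0 := by
  have := (hξ.intCast_mul hq).ne_int p
  exact sub_ne_zero.mpr this

lemma IsConsecutive.exists_next {ξ : ℝ} (hξ : Irrational ξ) {s : (ℤ × ℤ) × (ℤ × ℤ)}
    (hs : IsConsecutive ξ s) :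
    ∃ w : ℤ × ℤ, IsConsecutive ξ (s.2, w) ∧ s.1.2 + s.2.2 ≤ w.2 := by
  obtain ⟨⟨p, q⟩, ⟨p', q'⟩⟩ := s
  obtain ⟨h1, h2, h3, e, he, hdet, hneg, hpos⟩ := hs
  simp only at h1 h2 h3 hdet hneg hpos ⊢
  set L : ℝ := (q : ℝ) * ξ - p with hL
  set L' : ℝ := (q' : ℝ) * ξ - p' with hL'
  have hd : 0 < -((e : ℝ) * L') := by linarith
  set a : ℤ := ⌊(e : ℝ) * L / (-(e * L'))⌋ with ha
  have hfl : (a : ℝ) * (-(e * L')) ≤ e * L := (le_div_iff₀ hd).mp (Int.floor_le _)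
  have hlt : (e : ℝ) * L < (a + 1) * (-(e * L')) := (div_lt_iff₀ hd).mp (Int.lt_floor_add_one _)
  have ha1 : 1 ≤ a := by
    apply Int.le_floor.mpr
    rw [le_div_iff₀ hd]
    push_cast
    linarith
  have hq'' : q + q' ≤ q + a * q' := by nlinarith
  have hform : ((q + a * q' : ℤ) : ℝ) * ξ - ((p + a * p' : ℤ) : ℝ) = L + a * L' := by
    rw [hL, hL']; push_cast; ring
  have hne : L + a * L' ≠ 0 := by
    rw [← hform]
    exact hξ.int_mul_sub_ne_zero (by omega) _
  have he0 : (e : ℝ) ≠ 0 := by rcases he with rfl | rfl <;> norm_num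
  have hpos' : 0 < (e : ℝ) * (L + a * L') := by
    refine lt_of_le_of_ne (by linarith) (mul_ne_zero he0 hne).symm
  refine ⟨(p + a * p', q + a * q'), ⟨by simp only; omega, by simp only; omega,
    by simp only; omega, -e, by omega, ?_, ?_, ?_⟩, hq''⟩
  · simp only
    linear_combination -hdet
  · simp only [hform]
    push_cast
    linarith
  · simp only [hform, ← hL']
    push_cast
    linarith

/-- The continued fraction approximations `p n / q n` to an irrational `ξ ∈ (-1, 1)`. -/
theorem Irrational.exists_convergents {ξ : ℝ} (hξ : Irrational ξ) (h1 : |ξ| < 1) :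
    ∃ p q : ℕ → ℤ, (∀ n, 1 ≤ q n) ∧ (∀ n : ℕ, (n : ℤ) ≤ q n) ∧ (∀ n, q n ≤ q (n + 1)) ∧
      (∀ n, |p n| ≤ q n) ∧
      (∀ n, p n * q (n + 1) - p (n + 1) * q n = 1 ∨ p n * q (n + 1) - p (n + 1) * q n = -1) ∧
      (∀ n, |(q n : ℝ) * ξ - p n| * q (n + 1) ≤ 1) ∧
      (∀ n, 1 ≤ |(q n : ℝ) * ξ - p n| * (q n + q (n + 1))) := by
  classical
  choose! f hf hf' using fun (s : (ℤ × ℤ) × (ℤ × ℤ)) (hs : IsConsecutive ξ s) => hs.exists_next hξ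
  let st : ℕ → (ℤ × ℤ) × (ℤ × ℤ) :=
    fun n => Nat.rec ((1, 0), (⌊ξ⌋, 1)) (fun _ s => (s.2, f s)) n
  have hst : ∀ n, st (n + 1) = ((st n).2, f (st n)) := fun n => rfl
  have hfr : 0 < Int.fract ξ :=
    sub_pos.mpr (lt_of_le_of_ne (Int.floor_le ξ) (hξ.ne_int ⌊ξ⌋).symm)
  have hinv : ∀ n, IsConsecutive ξ (st n) := by
    intro n
    induction n with
    | zero =>
      refine ⟨le_rfl, le_rfl, by norm_num [st], -1, by simp, by simp [st], ?_, ?_⟩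
      · simpa [st] using hfr
      · simpa [st] using Int.fract_lt_one ξ
    | succ n ih => rw [hst]; exact hf _ ih
  have hfst : ∀ n, (st (n + 1)).1 = (st n).2 := fun n => rfl
  have hgrow : ∀ n, (st n).1.2 + (st n).2.2 ≤ (st (n + 1)).2.2 := fun n => hf' _ (hinv n)
  have hq1 : ∀ n, 1 ≤ (st n).2.2 := fun n => (hinv n).2.1
  have hmono : ∀ n, (st n).2.2 ≤ (st (n + 1)).2.2 := fun n => (hinv (n + 1)).2.2.1
  have hkey : ∀ n, |((st n).2.2 : ℝ) * ξ - (st n).2.1| * (st (n + 1)).2.2 ≤ 1 ∧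
      1 ≤ |((st n).2.2 : ℝ) * ξ - (st n).2.1| * ((st n).2.2 + (st (n + 1)).2.2) := by
    intro n
    obtain ⟨h0, h2, h3, e, he, hdet, hneg, hpos⟩ := hinv (n + 1)
    rw [hfst] at h0 h3 hdet hpos
    have hdet' : ((st (n + 1)).2.1 : ℝ) * (st n).2.2 - (st n).2.1 * (st (n + 1)).2.2 = e := by
      exact_mod_cast hdet
    have hqa : (1 : ℝ) ≤ (st n).2.2 := by exact_mod_cast hq1 n
    have hqb : (1 : ℝ) ≤ (st (n + 1)).2.2 := by exact_mod_cast hq1 (n + 1)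
    generalize ((st n).2.2 : ℝ) = q at *
    generalize ((st n).2.1 : ℝ) = p at *
    generalize ((st (n + 1)).2.2 : ℝ) = q' at *
    generalize ((st (n + 1)).2.1 : ℝ) = p' at *
    have hee : (e : ℝ) * e = 1 := by rcases he with rfl | rfl <;> norm_num
    have habs : |q * ξ - p| = e * (q * ξ - p) := by
      have h : 0 < (e : ℝ) * (q * ξ - p) := by linarith
      rcases he with rfl | rfl
      · simp only [Int.cast_one, one_mul] at h ⊢
        exact abs_of_pos h
      · simp only [Int.cast_neg, Int.cast_one, neg_mul, one_mul] at h ⊢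
        exact abs_of_neg (by linarith)
    have hid : e * (q * ξ - p) * q' - e * (q' * ξ - p') * q = 1 := by
      rw [← hee, ← hdet']; ring
    rw [habs]
    constructor <;> nlinarith
  refine ⟨fun n => (st n).2.1, fun n => (st n).2.2, hq1, ?_, hmono, ?_, ?_,
    fun n => (hkey n).1, fun n => (hkey n).2⟩
  · intro n
    induction n with
    | zero => exact zero_le_one.trans (hq1 0)
    | succ n ih =>
      cases n with
      | zero => simpa using hq1 1
      | succ n =>
        have h := hgrow (n + 1)
        rw [hfst] at h
        have := hq1 n
        push_cast at ih ⊢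
        linarith
  · intro n
    have hk := (hkey n).1
    have h2 : (1 : ℝ) ≤ (st (n + 1)).2.2 := by exact_mod_cast hq1 (n + 1)
    have hq : (1 : ℝ) ≤ (st n).2.2 := by exact_mod_cast hq1 n
    have hL : |((st n).2.2 : ℝ) * ξ - (st n).2.1| ≤ 1 := by
      nlinarith [abs_nonneg (((st n).2.2 : ℝ) * ξ - (st n).2.1)]
    have hlt : |((st n).2.1 : ℝ)| < (st n).2.2 + 1 := by
      rw [abs_lt] at h1 ⊢
      rw [abs_le] at hL
      constructor <;> nlinarith
    have : |(st n).2.1| < (st n).2.2 + 1 := by exact_mod_cast hlt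
    exact Int.lt_add_one_iff.mp this
  · intro n
    obtain ⟨-, -, -, e, he, hdet, -, -⟩ := hinv (n + 1)
    rw [hfst] at hdet
    dsimp only
    omega

/-- A property of natural numbers that holds at `m` and eventually fails must fail right after
holding somewhere beyond `m`. -/
lemma exists_last_of_eventually_not {P : ℕ → Prop} {m : ℕ} (hm : P m)
    (hN : ∃ N, ∀ n, N ≤ n → ¬ P n) : ∃ n, m ≤ n ∧ P n ∧ ¬ P (n + 1) := by
  by_contra! h
  obtain ⟨N, hN⟩ := hN
  have : ∀ n, m ≤ n → P n := fun n hn => Nat.le_induction hm (fun n hn ih => h n hn ih) n hn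
  exact hN (max m N) (le_max_right _ _) (this _ (le_max_left _ _))

/-- Simultaneous choice of the denominators for `x` and `y`. -/
lemma exists_balanced_denominators {q s : ℕ → ℤ} (hq1 : ∀ n, 1 ≤ q n) (hqn : ∀ n : ℕ, (n : ℤ) ≤ q n)
    (hs1 : ∀ n, 1 ≤ s n) (hsn : ∀ n : ℕ, (n : ℤ) ≤ s n) (hs : ∀ n, s n ≤ s (n + 1))
    {Y : ℝ} (hY : 0 < Y) (B : ℝ) :
    ∃ k j : ℕ, B ≤ q (k + 2) ∧
      (s (j + 1) : ℝ) ^ 3 * max (Y * q (k + 1)) (s (j + 1)) ≤ Y ^ 2 * (q (k + 2) : ℝ) ^ 2 ∧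
      Y * (max (Y * q (k + 1)) (s (j + 1)) * q (k + 2)) ≤
        (s (j + 1) : ℝ) ^ 3 * (s (j + 2) : ℝ) ^ 3 := by
  have hq1' : ∀ n, (1 : ℝ) ≤ q n := fun n => by exact_mod_cast hq1 n
  have hs1' : ∀ n, (1 : ℝ) ≤ s n := fun n => by exact_mod_cast hs1 n
  have hqn' : ∀ n : ℕ, (n : ℝ) ≤ q n := fun n => by exact_mod_cast hqn n
  have hsn' : ∀ n : ℕ, (n : ℝ) ≤ s n := fun n => by exact_mod_cast hsn n
  have hsm : Monotone fun n => (s n : ℝ) := monotone_nat_of_le_succ fun n => by exact_mod_cast hs n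
  have hcube : ∀ {u : ℝ}, 1 ≤ u → u ≤ u ^ 3 := fun hu => by
    simpa using pow_le_pow_right₀ hu (show 1 ≤ 3 by norm_num)
  obtain ⟨i, hi⟩ := exists_nat_ge (max (Y * q 1) (Y * B))
  set S₀ : ℝ := (s (i + 1) : ℝ)
  have hS₀1 : 1 ≤ S₀ := hs1' _
  have hiS : (i : ℝ) ≤ S₀ ^ 3 := by
    have h := hsn' (i + 1)
    push_cast at h
    have := hcube hS₀1
    linarith
  obtain ⟨k, -, hk, hk'⟩ := exists_last_of_eventually_not
    (P := fun k => Y * (q (k + 1) : ℝ) ≤ S₀ ^ 3) (m := 0)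
    (((le_max_left _ _).trans hi).trans hiS) (by
      obtain ⟨N, hN⟩ := exists_nat_gt (S₀ ^ 3 / Y)
      refine ⟨N, fun n hn => not_le.mpr ?_⟩
      rw [div_lt_iff₀ hY] at hN
      have h1 := hqn' (n + 1)
      have h2 : (N : ℝ) ≤ n := by exact_mod_cast hn
      push_cast at h1
      nlinarith)
  rw [not_le, show k + 1 + 1 = k + 2 from rfl] at hk'
  have hBq : B ≤ q (k + 2) := by
    have h : Y * B ≤ Y * q (k + 2) := (((le_max_right _ _).trans hi).trans hiS).trans hk'.le
    exact le_of_mul_le_mul_left h hY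
  refine ⟨k, ?_⟩
  have hQ1 := hq1' (k + 1)
  have hQ'1 := hq1' (k + 2)
  generalize (q (k + 1) : ℝ) = Q at *
  generalize (q (k + 2) : ℝ) = Q' at *
  obtain ⟨j, hij, hj, hj'⟩ := exists_last_of_eventually_not
    (P := fun j => (s (j + 1) : ℝ) ^ 3 * max (Y * Q) (s (j + 1)) ≤ Y ^ 2 * Q' ^ 2) (m := i)
    (by
      have h1 : max (Y * Q) S₀ ≤ Y * Q' :=
        max_le (hk.trans hk'.le) ((hcube hS₀1).trans hk'.le)
      calc S₀ ^ 3 * max (Y * Q) S₀ ≤ (Y * Q') * (Y * Q') := by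
            gcongr
        _ = Y ^ 2 * Q' ^ 2 := by ring)
    (by
      obtain ⟨N, hN⟩ := exists_nat_gt (Y ^ 2 * Q' ^ 2)
      refine ⟨N, fun n hn => not_le.mpr ?_⟩
      have h1 := hsn' (n + 1)
      have h2 : (N : ℝ) ≤ n := by exact_mod_cast hn
      have h3 := hcube (hs1' (n + 1))
      have h4 : (1 : ℝ) ≤ max (Y * Q) (s (n + 1)) := le_max_of_le_right (hs1' (n + 1))
      push_cast at h1
      nlinarith)
  rw [not_le, show j + 1 + 1 = j + 2 from rfl] at hj'
  refine ⟨j, hBq, hj, ?_⟩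
  have hSS' : (s (j + 1) : ℝ) ≤ s (j + 2) := hsm (Nat.le_succ _)
  have hS₀S : S₀ ≤ s (j + 1) := hsm (by omega)
  have hS1 := hs1' (j + 1)
  generalize (s (j + 1) : ℝ) = S at *
  generalize (s (j + 2) : ℝ) = S' at *
  have hYQ : Y * Q ≤ S ^ 3 := hk.trans (by gcongr)
  have hQQ' : Q ≤ Q' := le_of_mul_le_mul_left (hk.trans hk'.le) hY
  have hS'1 : 1 ≤ S' := hS1.trans hSS'
  rcases le_or_gt S' (Y * Q) with h | h
  · rw [max_eq_left h] at hj'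
    rw [max_eq_left (hSS'.trans h)]
    have h1 : Y * Q' ^ 2 ≤ S' ^ 3 * Q := by nlinarith
    have h2 : Y * Q' * Q ≤ S' ^ 3 * Q := by nlinarith [mul_pos hY (by linarith : (0:ℝ) < Q')]
    have h3 : Y * Q' ≤ S' ^ 3 := le_of_mul_le_mul_right h2 (by linarith)
    calc Y * (Y * Q * Q') = Y * Q * (Y * Q') := by ring
      _ ≤ S ^ 3 * S' ^ 3 := by gcongr
  · rw [max_eq_right h.le] at hj'
    have h1 : Y * Q' ≤ S' ^ 2 := by
      have : (Y * Q') ^ 2 < (S' ^ 2) ^ 2 := by nlinarith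
      exact (lt_of_pow_lt_pow_left₀ 2 (by positivity) this).le
    have h2 : S' ^ 2 ≤ S' ^ 3 := pow_le_pow_right₀ hS'1 (by norm_num)
    have h3 : max (Y * Q) S ≤ S ^ 3 := max_le hYQ (hcube hS1)
    calc Y * (max (Y * Q) S * Q') = max (Y * Q) S * (Y * Q') := by ring
      _ ≤ S ^ 3 * S' ^ 3 := by
        gcongr
        exact h1.trans h2

/-- The matrix built from two consecutive approximations of `ξ` (as rows) and two consecutive
approximations of `η` (as columns), glued by a suitable unipotent matrix, maps `(ξ, 1)` close
to `(η z, z)`. -/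
lemma exists_matrix_act_near {ξ η z : ℝ} {p₀ q₀ p q t₀ s₀ t s : ℤ} {Q S : ℝ}
    (hq₀ : 1 ≤ q₀) (hq : q₀ ≤ q) (hp₀ : |p₀| ≤ q₀) (hp : |p| ≤ q)
    (hdet : p₀ * q - p * q₀ = 1 ∨ p₀ * q - p * q₀ = -1)
    (ha : |(q₀ : ℝ) * ξ - p₀| * q ≤ 1) (hb : |(q : ℝ) * ξ - p| * Q ≤ 1)
    (hb' : 1 ≤ |(q : ℝ) * ξ - p| * (q + Q)) (hQ : (q : ℝ) ≤ Q)
    (hs₀ : 1 ≤ s₀) (hs : s₀ ≤ s) (ht₀ : |t₀| ≤ s₀) (ht : |t| ≤ s)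
    (hdet' : t₀ * s - t * s₀ = 1 ∨ t₀ * s - t * s₀ = -1)
    (hη : |(s : ℝ) * η - t| * S ≤ 1) (hS : 1 ≤ S) :
    ∃ γ : Matrix (Fin 2) (Fin 2) ℤ, γ.det = 1 ∧ act γ ![ξ, 1] ≠ ![η * z, z] ∧
      vnorm (act γ ![ξ, 1] - ![η * z, z]) ≤ 2 * (s / Q) + |z| / (s * S) ∧
      mnorm γ ≤ 7 * (max (|z| * q) s * Q) := by
  obtain ⟨σ, hσ, hσdet⟩ : ∃ σ : ℤ, (σ = 1 ∨ σ = -1) ∧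
      σ * ((t₀ * s - t * s₀) * (p₀ * q - p * q₀)) = -1 := by
    rcases hdet with h | h <;> rcases hdet' with h' | h' <;> rw [h, h']
    · exact ⟨-1, by simp⟩
    · exact ⟨1, by simp⟩
    · exact ⟨1, by simp⟩
    · exact ⟨-1, by simp⟩
  have hσabs : |(σ : ℝ)| = 1 := by rcases hσ with rfl | rfl <;> simp
  have hq₀' : (1 : ℝ) ≤ q₀ := by exact_mod_cast hq₀
  have hq' : (q₀ : ℝ) ≤ q := by exact_mod_cast hq
  have hp₀' : |(p₀ : ℝ)| ≤ q₀ := by exact_mod_cast hp₀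
  have hp' : |(p : ℝ)| ≤ q := by exact_mod_cast hp
  have hs₀' : (1 : ℝ) ≤ s₀ := by exact_mod_cast hs₀
  have hs' : (s₀ : ℝ) ≤ s := by exact_mod_cast hs
  have ht₀' : |(t₀ : ℝ)| ≤ s := (show |(t₀ : ℝ)| ≤ s₀ by exact_mod_cast ht₀).trans hs'
  have ht' : |(t : ℝ)| ≤ s := by exact_mod_cast ht
  have hspos : (0 : ℝ) < s := by linarith
  have hqpos : (0 : ℝ) < q := by linarith
  have hQpos : 0 < Q := by linarith
  set a : ℝ := (q₀ : ℝ) * ξ - p₀ with ha_def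
  set b : ℝ := (q : ℝ) * ξ - p with hb_def
  have hb0 : b ≠ 0 := by
    intro h
    rw [h] at hb'
    norm_num at hb'
  have hbpos : 0 < |b| := abs_pos.mpr hb0
  set w : ℝ := (z / s - a) / b with hw
  obtain ⟨l, hl, hne⟩ : ∃ l : ℤ, |(l : ℝ) - w| ≤ 1 ∧ s * (a + l * b) + σ * s₀ * b ≠ z := by
    have h1 := Int.floor_le w
    have h2 := Int.lt_floor_add_one w
    by_cases h : s * (a + ⌊w⌋ * b) + σ * s₀ * b = z
    · refine ⟨⌊w⌋ + 1, ?_, fun h' => mul_ne_zero hspos.ne' hb0 ?_⟩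
      · push_cast
        rw [abs_le]; constructor <;> linarith
      · push_cast at h'
        linear_combination h' - h
    · exact ⟨⌊w⌋, by rw [abs_le]; constructor <;> linarith, h⟩
  have hdist : |a + l * b - z / s| ≤ |b| := by
    have : a + l * b - z / s = (l - w) * b := by rw [hw]; field_simp; ring
    rw [this, abs_mul]
    exact mul_le_of_le_one_left hbpos.le hl
  have hwabs : |w| ≤ (|z| / s + 1 / q) * (q + Q) := by
    have h1 : |w| * |b| ≤ |z| / s + 1 / q := by
      rw [← abs_mul, hw, div_mul_cancel₀ _ hb0]
      refine (abs_sub _ _).trans (add_le_add ?_ ?_)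
      · rw [abs_div, abs_of_pos hspos]
      · rwa [le_div_iff₀ hqpos]
    calc |w| ≤ |w| * (|b| * (q + Q)) := le_mul_of_one_le_right (abs_nonneg _) hb'
      _ = |w| * |b| * (q + Q) := by ring
      _ ≤ _ := by gcongr
  have hlabs : |(l : ℝ)| ≤ |w| + 1 := by
    have := abs_add_le ((l : ℝ) - w) w
    rw [sub_add_cancel] at this
    linarith
  have hentry : ∀ {u u₀ r r₀ : ℝ}, |u| ≤ s → |u₀| ≤ s → |r| ≤ q → |r₀| ≤ q₀ →
      |u * (r₀ + l * r) + σ * u₀ * r| ≤ 7 * (max (|z| * q) s * Q) := by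
    intro u u₀ r r₀ hu hu₀ hr hr₀
    have h1 : |u * (r₀ + l * r) + σ * u₀ * r| ≤ s * (q + |(l : ℝ)| * q) + 1 * s * q := by
      refine (abs_add_le _ _).trans ?_
      rw [abs_mul, abs_mul, abs_mul, hσabs]
      gcongr
      refine (abs_add_le _ _).trans ?_
      rw [abs_mul]
      gcongr
      exact hr₀.trans hq'
    have h2 : s * q * |w| ≤ (|z| * q + s) * (q + Q) := by
      calc s * q * |w| ≤ s * q * ((|z| / s + 1 / q) * (q + Q)) := by gcongr
        _ = _ := by field_simp
    have h3 : s * q * |(l : ℝ)| ≤ s * q * (|w| + 1) := by gcongr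
    have h4 : (|z| * q + s) * (q + Q) ≤ (max (|z| * q) s + max (|z| * q) s) * (Q + Q) := by
      gcongr
      · exact le_max_left _ _
      · exact le_max_right _ _
    have h5 : s * q ≤ max (|z| * q) s * Q := by
      gcongr
      exact le_max_right _ _
    linarith
  have hbQ : s * |b| ≤ s / Q := by
    rw [le_div_iff₀ hQpos, mul_assoc]
    exact mul_le_of_le_one_right hspos.le hb
  have hcoord : ∀ {u u₀ : ℝ}, |u| ≤ s → |u₀| ≤ s →
      |u * (a + l * b - z / s) + σ * u₀ * b| ≤ 2 * (s / Q) := by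
    intro u u₀ hu hu₀
    have h1 : |u * (a + l * b - z / s) + σ * u₀ * b| ≤ s * |b| + 1 * s * |b| := by
      refine (abs_add_le _ _).trans ?_
      rw [abs_mul, abs_mul, abs_mul, hσabs]
      gcongr
    linarith
  have hrem : 0 ≤ |z| / (s * S) := by positivity
  refine ⟨!![t * (q₀ + l * q) + σ * t₀ * q, -(t * (p₀ + l * p) + σ * t₀ * p);
    s * (q₀ + l * q) + σ * s₀ * q, -(s * (p₀ + l * p) + σ * s₀ * p)], ?_, ?_, ?_, ?_⟩
  · rw [Matrix.det_fin_two_of]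
    linear_combination -hσdet
  · intro h
    apply hne
    have h1 := congrFun h 1
    simp [act, Matrix.mulVec, dotProduct, Fin.sum_univ_two] at h1
    rw [← h1, ha_def, hb_def]
    ring
  · refine max_le ?_ ?_
    · have h0 : (t : ℝ) * (z / s) - η * z = -(z / s * (s * η - t)) := by field_simp; ring
      have h1 : |(t : ℝ) * (z / s) - η * z| ≤ |z| / (s * S) := by
        rw [h0, abs_neg, abs_mul, abs_div, abs_of_pos hspos, ← div_div, div_eq_mul_inv (_ / _) S]
        gcongr
        rwa [← one_div, le_div_iff₀ (by linarith)]
      have h2 := hcoord ht' ht₀'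
      have h3 := abs_add_le (t * (a + l * b - z / s) + σ * t₀ * b) ((t : ℝ) * (z / s) - η * z)
      refine le_trans (le_of_eq ?_) (h3.trans (add_le_add h2 h1))
      simp [act]
      congr 1
      rw [ha_def, hb_def]
      ring
    · have h2 := hcoord (u := s) (u₀ := s₀) (abs_of_pos hspos).le
        (by rw [abs_of_pos (by linarith)]; exact hs')
      refine le_trans (le_of_eq ?_) (h2.trans (le_add_of_nonneg_right hrem))
      simp [act]
      congr 1
      rw [mul_sub, mul_div_cancel₀ _ hspos.ne', ha_def, hb_def]
      ring
  · have hs₀'' : |(s₀ : ℝ)| ≤ s := by rw [abs_of_pos (by linarith)]; exact hs'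
    have hs'' : |(s : ℝ)| ≤ s := (abs_of_pos hspos).le
    have hqq : |(q : ℝ)| ≤ q := (abs_of_pos hqpos).le
    have hqq₀ : |(q₀ : ℝ)| ≤ q₀ := (abs_of_pos (by linarith)).le
    refine max_le (max_le ?_ ?_) (max_le ?_ ?_)
    · simpa using hentry ht' ht₀' hqq hqq₀
    · simpa only [Matrix.of_apply, Matrix.cons_val', Matrix.cons_val_zero, Matrix.cons_val_one,
        Matrix.cons_val_fin_one, Int.cast_neg, abs_neg, Int.cast_add, Int.cast_mul]
        using hentry ht' ht₀' hp' hp₀'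
    · simpa using hentry hs'' hs₀'' hqq hqq₀
    · simpa only [Matrix.of_apply, Matrix.cons_val', Matrix.cons_val_zero, Matrix.cons_val_one,
        Matrix.cons_val_fin_one, Int.cast_neg, abs_neg, Int.cast_add, Int.cast_mul]
        using hentry hs'' hs₀'' hp' hp₀'

lemma mnorm_nonneg (γ : Matrix (Fin 2) (Fin 2) ℤ) : 0 ≤ mnorm γ :=
  (abs_nonneg _).trans ((le_max_left _ _).trans (le_max_left _ _))

lemma vnorm_nonneg (v : Fin 2 → ℝ) : 0 ≤ vnorm v :=
  (abs_nonneg _).trans (le_max_left _ _)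

/-- `y` is approximated arbitrarily well, but not attained, by points `γ x` with
`|γ x - y| ^ 3 |γ| ≤ 189 |x| |y| ^ 2`. -/
def IsOrbitApproximable (x y : Fin 2 → ℝ) : Prop :=
  ∀ ε > 0, ∃ γ : Matrix (Fin 2) (Fin 2) ℤ, γ.det = 1 ∧ act γ x ≠ y ∧ vnorm (act γ x - y) < ε ∧
    vnorm (act γ x - y) ^ 3 * mnorm γ ≤ 189 * (vnorm x * vnorm y ^ 2)

lemma isOrbitApproximable_of_abs_lt {ξ η z : ℝ} (hξ : Irrational ξ) (hξ1 : |ξ| < 1)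
    (hη : Irrational η) (hη1 : |η| < 1) (hz : z ≠ 0) :
    IsOrbitApproximable ![ξ, 1] ![η * z, z] := by
  intro ε hε
  obtain ⟨p, q, hq1, hqn, hqm, hpq, hdet, hup, hlow⟩ := hξ.exists_convergents hξ1
  obtain ⟨t, s, hs1, hsn, hsm, hts, hdet', hup', -⟩ := hη.exists_convergents hη1
  have hzpos : 0 < |z| := abs_pos.mpr hz
  obtain ⟨k, j, hB, hA, hC⟩ := exists_balanced_denominators hq1 hqn hs1 hsn hsm hzpos
    (27 * |z| ^ 2 / ε ^ 3 + 1)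
  have hS'1 : (1 : ℝ) ≤ s (j + 2) := by exact_mod_cast hs1 _
  obtain ⟨γ, hγ, hne, hE, hG⟩ := exists_matrix_act_near (z := z) (hq1 k) (hqm k) (hpq k)
    (hpq (k + 1)) (hdet k) (hup k) (hup (k + 1)) (hlow (k + 1))
    (by exact_mod_cast hqm (k + 1)) (hs1 j) (hsm j) (hts j) (hts (j + 1)) (hdet' j)
    (hup' (j + 1)) hS'1
  have hS1 : (1 : ℝ) ≤ s (j + 1) := by exact_mod_cast hs1 _
  have hQ'1 : (1 : ℝ) ≤ q (k + 2) := by exact_mod_cast hq1 _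
  rw [show k + 1 + 1 = k + 2 from rfl] at hE hG
  generalize (s (j + 1) : ℝ) = S at *
  generalize (s (j + 2) : ℝ) = S' at *
  generalize (q (k + 1) : ℝ) = Q at *
  generalize (q (k + 2) : ℝ) = Q' at *
  set M := max (|z| * Q) S with hM
  have hM1 : 1 ≤ M := le_max_of_le_right hS1
  set E := vnorm (act γ ![ξ, 1] - ![η * z, z]) with hE_def
  have hE0 : 0 ≤ E := vnorm_nonneg _
  set D : ℝ := M * Q' with hD
  have hDQ : Q' ≤ D := le_mul_of_one_le_left (by linarith) hM1
  have hDpos : 0 < D := by linarith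
  have h1 : (S / Q') ^ 3 * D ≤ |z| ^ 2 := by
    rw [hD, div_pow, div_mul_eq_mul_div, div_le_iff₀ (by positivity)]
    calc S ^ 3 * (M * Q') = S ^ 3 * M * Q' := by ring
      _ ≤ |z| ^ 2 * Q' ^ 2 * Q' := by gcongr
      _ = |z| ^ 2 * Q' ^ 3 := by ring
  have h2 : (|z| / (S * S')) ^ 3 * D ≤ |z| ^ 2 := by
    rw [div_pow, div_mul_eq_mul_div, div_le_iff₀ (by positivity)]
    calc |z| ^ 3 * D = |z| ^ 2 * (|z| * D) := by ring
      _ ≤ |z| ^ 2 * (S ^ 3 * S' ^ 3) := by gcongr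
      _ = |z| ^ 2 * (S * S') ^ 3 := by ring
  have h3 : E ^ 3 * D ≤ 27 * |z| ^ 2 := by
    set m := max (S / Q') (|z| / (S * S')) with hm
    have hEm : E ≤ 3 * m := by
      have := le_max_left (S / Q') (|z| / (S * S'))
      have := le_max_right (S / Q') (|z| / (S * S'))
      linarith
    have hmD : m ^ 3 * D ≤ |z| ^ 2 := by
      rcases max_choice (S / Q') (|z| / (S * S')) with h | h <;> rw [hm, h] <;> assumption
    calc E ^ 3 * D ≤ (3 * m) ^ 3 * D := by gcongr
      _ = 27 * (m ^ 3 * D) := by ring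
      _ ≤ 27 * |z| ^ 2 := by gcongr
  refine ⟨γ, hγ, hne, ?_, ?_⟩
  · have h4 : 27 * |z| ^ 2 < ε ^ 3 * D := by
      rw [← div_lt_iff₀' (by positivity)]
      linarith
    exact lt_of_pow_lt_pow_left₀ 3 hε.le (lt_of_mul_lt_mul_right (h3.trans_lt h4) hDpos.le)
  · have hx : vnorm ![ξ, 1] = 1 := by simp [vnorm, hξ1.le]
    have hy : vnorm ![η * z, z] = |z| := by
      simp only [vnorm, Matrix.cons_val_zero, Matrix.cons_val_one, abs_mul]
      exact max_eq_right (mul_le_of_le_one_left hzpos.le hη1.le)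
    rw [hx, hy]
    calc E ^ 3 * mnorm γ ≤ E ^ 3 * (7 * D) := by gcongr
      _ = 7 * (E ^ 3 * D) := by ring
      _ ≤ 7 * (27 * |z| ^ 2) := by gcongr
      _ = _ := by ring

/-- The rotation `(v₀, v₁) ↦ (v₁, -v₀)`. -/
def quarterTurn : Matrix (Fin 2) (Fin 2) ℤ := !![0, 1; -1, 0]

lemma act_mul (g h : Matrix (Fin 2) (Fin 2) ℤ) (v : Fin 2 → ℝ) :
    act (g * h) v = act g (act h v) := by
  have : (g * h).map (Int.cast : ℤ → ℝ) = g.map Int.cast * h.map Int.cast :=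
    Matrix.map_mul (f := Int.castRingHom ℝ)
  rw [act, this, ← Matrix.mulVec_mulVec]
  rfl

lemma act_quarterTurn (v : Fin 2 → ℝ) : act quarterTurn v = ![v 1, -v 0] := by
  ext i
  fin_cases i <;> simp [act, quarterTurn, Matrix.mulVec, dotProduct, Fin.sum_univ_two]

lemma act_sub (g : Matrix (Fin 2) (Fin 2) ℤ) (v w : Fin 2 → ℝ) :
    act g (v - w) = act g v - act g w := Matrix.mulVec_sub _ _ _

lemma act_smul (g : Matrix (Fin 2) (Fin 2) ℤ) (c : ℝ) (v : Fin 2 → ℝ) :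
    act g (c • v) = c • act g v := Matrix.mulVec_smul _ _ _

lemma vnorm_act_quarterTurn (v : Fin 2 → ℝ) : vnorm (act quarterTurn v) = vnorm v := by
  rw [act_quarterTurn]
  simp [vnorm, max_comm]

lemma vnorm_smul (c : ℝ) (v : Fin 2 → ℝ) : vnorm (c • v) = |c| * vnorm v := by
  simp [vnorm, abs_mul, mul_max_of_nonneg]

lemma mnorm_mul_quarterTurn (g : Matrix (Fin 2) (Fin 2) ℤ) :
    mnorm (g * quarterTurn) = mnorm g := by
  simp [mnorm, quarterTurn, Matrix.mul_apply, Fin.sum_univ_two, max_comm]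

lemma mnorm_quarterTurn_mul (g : Matrix (Fin 2) (Fin 2) ℤ) :
    mnorm (quarterTurn * g) = mnorm g := by
  simp [mnorm, quarterTurn, Matrix.mul_apply, Fin.sum_univ_two, max_comm]

lemma det_quarterTurn : quarterTurn.det = 1 := by
  simp [quarterTurn, Matrix.det_fin_two_of]

lemma IsOrbitApproximable.of_act_left {x y : Fin 2 → ℝ}
    (h : IsOrbitApproximable (act quarterTurn x) y) : IsOrbitApproximable x y := by
  intro ε hε
  obtain ⟨γ, hγ, h1, h2, h3⟩ := h ε hε
  refine ⟨γ * quarterTurn, by rw [Matrix.det_mul, hγ, det_quarterTurn, one_mul], ?_, ?_, ?_⟩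
  · rwa [act_mul]
  · rwa [act_mul]
  · rwa [act_mul, mnorm_mul_quarterTurn, ← vnorm_act_quarterTurn x]

lemma IsOrbitApproximable.act_right {x y : Fin 2 → ℝ}
    (h : IsOrbitApproximable x y) : IsOrbitApproximable x (act quarterTurn y) := by
  intro ε hε
  obtain ⟨γ, hγ, h1, h2, h3⟩ := h ε hε
  refine ⟨quarterTurn * γ, by rw [Matrix.det_mul, hγ, det_quarterTurn, one_mul], ?_, ?_, ?_⟩
  · rw [act_mul]
    intro h
    apply h1
    rw [act_quarterTurn, act_quarterTurn] at h
    have h0 := congrFun h 0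
    have h1 := congrFun h 1
    simp at h0 h1
    ext i
    fin_cases i <;> assumption
  · rwa [act_mul, ← act_sub, vnorm_act_quarterTurn]
  · rwa [act_mul, ← act_sub, vnorm_act_quarterTurn, vnorm_act_quarterTurn, mnorm_quarterTurn_mul]

lemma IsOrbitApproximable.smul {x y : Fin 2 → ℝ} (h : IsOrbitApproximable x y) {c : ℝ}
    (hc : c ≠ 0) : IsOrbitApproximable (c • x) (c • y) := by
  intro ε hε
  have hc' : 0 < |c| := abs_pos.mpr hc
  obtain ⟨γ, hγ, h1, h2, h3⟩ := h (ε / |c|) (by positivity)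
  refine ⟨γ, hγ, ?_, ?_, ?_⟩
  · rw [act_smul]
    exact fun h => h1 (smul_right_injective _ hc h)
  · rw [act_smul, ← smul_sub, vnorm_smul, mul_comm]
    rwa [lt_div_iff₀ hc'] at h2
  · rw [act_smul, ← smul_sub, vnorm_smul, vnorm_smul, vnorm_smul]
    calc _ = |c| ^ 3 * (vnorm (act γ x - y) ^ 3 * mnorm γ) := by ring
      _ ≤ |c| ^ 3 * (189 * (vnorm x * vnorm y ^ 2)) := by gcongr
      _ = _ := by ring

lemma isOrbitApproximable_of_irrational_of_abs_lt {x y : Fin 2 → ℝ} (hx : x 1 ≠ 0)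
    (hξ : Irrational (x 0 / x 1)) (hxlt : |x 0 / x 1| < 1) (hy : y 1 ≠ 0)
    (hη : Irrational (y 0 / y 1)) (hylt : |y 0 / y 1| < 1) : IsOrbitApproximable x y := by
  have h := (isOrbitApproximable_of_abs_lt hξ hxlt hη hylt (z := y 1 / x 1)
    (div_ne_zero hy hx)).smul hx
  convert h using 1 <;> ext i <;> fin_cases i <;> simp <;> field_simp

lemma Irrational.abs_lt_one_or_abs_inv_lt_one {r : ℝ} (hr : Irrational r) :
    |r| < 1 ∨ |r⁻¹| < 1 := by
  rcases lt_trichotomy |r| 1 with h | h | h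
  · exact Or.inl h
  · rcases eq_or_eq_neg_of_abs_eq h with h | h
    · exact absurd h hr.ne_one
    · exact absurd (by rw [h]; simp) (hr.ne_int (-1))
  · right
    rw [abs_inv]
    exact inv_lt_one_of_one_lt₀ h

lemma isOrbitApproximable_of_irrational_left {x y : Fin 2 → ℝ} (hx : x 1 ≠ 0)
    (hξ : Irrational (x 0 / x 1)) (hy : y 1 ≠ 0)
    (hη : Irrational (y 0 / y 1)) (hylt : |y 0 / y 1| < 1) : IsOrbitApproximable x y := by
  rcases hξ.abs_lt_one_or_abs_inv_lt_one with h | h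
  · exact isOrbitApproximable_of_irrational_of_abs_lt hx hξ h hy hη hylt
  · have hx0 : x 0 ≠ 0 := by
      intro h0
      rw [h0, zero_div] at hξ
      exact hξ.ne_zero rfl
    apply IsOrbitApproximable.of_act_left
    rw [act_quarterTurn]
    have he : x 1 / -x 0 = -(x 0 / x 1)⁻¹ := by rw [inv_div, div_neg]
    refine isOrbitApproximable_of_irrational_of_abs_lt ?_ ?_ ?_ hy hη hylt
    · simpa using hx0
    · exact (congrArg Irrational he).mpr hξ.inv.neg
    · simpa [he] using h

theorem isOrbitApproximable_of_irrational {x y : Fin 2 → ℝ} (hx : x 1 ≠ 0)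
    (hξ : Irrational (x 0 / x 1)) (hy : y 1 ≠ 0)
    (hη : Irrational (y 0 / y 1)) : IsOrbitApproximable x y := by
  rcases hη.abs_lt_one_or_abs_inv_lt_one with h | h
  · exact isOrbitApproximable_of_irrational_left hx hξ hy hη h
  · have hy0 : y 0 ≠ 0 := by
      intro h0
      rw [h0, zero_div] at hη
      exact hη.ne_zero rfl
    have he : -y 1 / y 0 = -(y 0 / y 1)⁻¹ := by rw [inv_div, neg_div]
    have := (isOrbitApproximable_of_irrational_left (y := ![-y 1, y 0]) hx hξ (by simpa using hy0)
      ((congrArg Irrational he).mpr hη.inv.neg) (by simpa [he] using h)).act_right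
    rw [act_quarterTurn] at this
    convert this using 1
    ext i
    fin_cases i <;> simp

lemma vnorm_pos {v : Fin 2 → ℝ} (hv : v ≠ 0) : 0 < vnorm v := by
  by_contra! h
  apply hv
  have h0 : |v 0| ≤ 0 := (le_max_left _ _).trans h
  have h1 : |v 1| ≤ 0 := (le_max_right _ _).trans h
  ext i
  fin_cases i
  · simpa using h0
  · simpa using h1

lemma mnorm_pos {γ : Matrix (Fin 2) (Fin 2) ℤ} (hγ : γ.det = 1) : 0 < mnorm γ := by
  refine lt_of_le_of_ne (mnorm_nonneg γ) fun h => ?_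
  have h0 : |(γ 0 0 : ℝ)| ≤ 0 := h ▸ (le_max_left _ _).trans (le_max_left _ _)
  have h1 : |(γ 0 1 : ℝ)| ≤ 0 := h ▸ (le_max_right _ _).trans (le_max_left _ _)
  have h0' : γ 0 0 = 0 := by simpa using h0
  have h1' : γ 0 1 = 0 := by simpa using h1
  rw [Matrix.det_fin_two, h0', h1'] at hγ
  simp at hγ

lemma le_of_pow_three_mul_le {E G X Y : ℝ} (hG : 0 < G) (hX : 0 ≤ X) (hY : 0 ≤ Y)
    (h : E ^ 3 * G ≤ 189 * (X * Y ^ 2)) :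
    E ≤ 7 * Real.sqrt 5 * X ^ ((1 : ℝ) / 3) * Y ^ ((2 : ℝ) / 3) / G ^ ((1 : ℝ) / 3) := by
  have hX3 : (X ^ ((1 : ℝ) / 3)) ^ 3 = X := by
    rw [← Real.rpow_natCast, ← Real.rpow_mul hX]; norm_num
  have hY3 : (Y ^ ((2 : ℝ) / 3)) ^ 3 = Y ^ 2 := by
    rw [← Real.rpow_natCast, ← Real.rpow_mul hY]; norm_num
  have hG3 : (G ^ ((1 : ℝ) / 3)) ^ 3 = G := by
    rw [← Real.rpow_natCast, ← Real.rpow_mul hG.le]; norm_num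
  have h5 : 1 ≤ Real.sqrt 5 := Real.one_le_sqrt.mpr (by norm_num)
  have hc : 189 ≤ (7 * Real.sqrt 5) ^ 3 :=
    (by norm_num : (189 : ℝ) ≤ 7 ^ 3).trans (by gcongr; linarith)
  rw [le_div_iff₀ (by positivity)]
  refine le_of_pow_le_pow_left₀ (n := 3) (by norm_num) (by positivity) ?_
  rw [mul_pow, mul_pow, mul_pow _ (X ^ _), hX3, hY3, hG3, mul_assoc _ X]
  exact h.trans (by gcongr)

/-- approximation to a point `y` of irrational slope: infinitely many
`γ ∈ SL(2, ℤ)` with `|γ x - y| ≤ 7√5 |x|^{1/3} |y|^{2/3} / |γ|^{1/3}`. -/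
theorem stmt6 (x y : Fin 2 → ℝ) (hx2 : x 1 ≠ 0) (hξ : Irrational (x 0 / x 1))
    (hy2 : y 1 ≠ 0) (hy : Irrational (y 0 / y 1)) :
    {γ : Matrix (Fin 2) (Fin 2) ℤ | γ.det = 1 ∧
      vnorm (act γ x - y) ≤ 7 * Real.sqrt 5 * vnorm x ^ ((1 : ℝ) / 3) *
        vnorm y ^ ((2 : ℝ) / 3) / mnorm γ ^ ((1 : ℝ) / 3)}.Infinite := by
  set A := {γ : Matrix (Fin 2) (Fin 2) ℤ | γ.det = 1 ∧
      vnorm (act γ x - y) ≤ 7 * Real.sqrt 5 * vnorm x ^ ((1 : ℝ) / 3) *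
        vnorm y ^ ((2 : ℝ) / 3) / mnorm γ ^ ((1 : ℝ) / 3)}
  intro hfin
  have hpos : ∀ γ ∈ A, act γ x ≠ y → 0 < vnorm (act γ x - y) :=
    fun γ _ hne => vnorm_pos (sub_ne_zero.mpr hne)
  obtain ⟨ε, hε, hεle⟩ : ∃ ε > 0, ∀ γ ∈ A, act γ x ≠ y → ε ≤ vnorm (act γ x - y) := by
    rcases (A ∩ {γ | act γ x ≠ y}).eq_empty_or_nonempty with h | h
    · exact ⟨1, one_pos, fun γ hγ hne => absurd (show γ ∈ A ∩ {γ | act γ x ≠ y} from ⟨hγ, hne⟩)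
        (h ▸ Set.notMem_empty γ)⟩
    · obtain ⟨γ, hγ, hmin⟩ := Set.exists_min_image _ (fun γ => vnorm (act γ x - y))
        (hfin.inter_of_left _) h
      exact ⟨_, hpos γ hγ.1 hγ.2, fun γ' hγ' hne => hmin γ' ⟨hγ', hne⟩⟩
  obtain ⟨γ, hdet, hne, hlt, hle⟩ := isOrbitApproximable_of_irrational hx2 hξ hy2 hy ε hε
  have hγ : γ ∈ A := ⟨hdet, le_of_pow_three_mul_le (mnorm_pos hdet)
    (vnorm_nonneg _) (vnorm_nonneg _) hle⟩
  exact (hεle γ hγ hne).not_gt hlt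
end

section
/- Let x ∈ ℝ² have irrational slope ξ and y ∈ ℝ² have irrational slope y₁/y₂. Then μ(x,y) ≥ 1/3 and μ̂(x,y) ≥ (ω(y)+1)/(2(2ω(y)+1)ω(ξ)) ≥ 1/(4ω(ξ)), where y = y₁/y₂. -/
open Matrix MeasureTheory

/-- One step of the continued fraction algorithm on consecutive convergents `p' / q'`, `p / q`. -/
lemma exists_next_convergent {α : ℝ} (hα : Irrational α) {q' q p' p : ℤ}
    (hdet : (q * p' - p * q') ^ 2 = 1)
    (hlt : |q * α - p| < |q' * α - p'|) (hsign : (q * α - p) * (q' * α - p') < 0) :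
    ∃ a : ℤ, 1 ≤ a ∧ ((q' + a * q) * p - (p' + a * p) * q) ^ 2 = 1 ∧
      |((q' + a * q : ℤ) : ℝ) * α - (p' + a * p : ℤ)| < |q * α - p| ∧
      (((q' + a * q : ℤ) : ℝ) * α - (p' + a * p : ℤ)) * (q * α - p) < 0 := by
  have hdet' : ((q' + ⌊|q' * α - p'| / |q * α - p|⌋ * q) * p -
      (p' + ⌊|q' * α - p'| / |q * α - p|⌋ * p) * q) ^ 2 = 1 := by
    linear_combination hdet
  set e : ℝ := q * α - p with he
  set e' : ℝ := q' * α - p' with he'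
  have he0 : e ≠ 0 := by rintro h; simp [h] at hsign
  have hpos : 0 < |e| := abs_pos.2 he0
  set a : ℤ := ⌊|e'| / |e|⌋ with ha
  have ha1 : 1 ≤ a := by
    rw [ha, Int.le_floor]
    rw [Int.cast_one, one_le_div hpos]
    exact hlt.le
  have h1 : (a : ℝ) * |e| ≤ |e'| := by
    rw [← le_div_iff₀ hpos]; exact Int.floor_le _
  have h2 : |e'| < (a + 1) * |e| := by
    rw [← div_lt_iff₀ hpos]; exact Int.lt_floor_add_one _
  have hE : ((q' + a * q : ℤ) : ℝ) * α - (p' + a * p : ℤ) = e' + a * e := by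
    push_cast; rw [he, he']; ring
  have hne : e' + a * e ≠ 0 := by
    rw [← hE]
    intro h
    by_cases h0 : q' + a * q = 0
    · have hp0 : p' + a * p = 0 := by
        rw [h0] at h
        simp only [Int.cast_zero, zero_mul, zero_sub, neg_eq_zero, Int.cast_eq_zero] at h
        exact h
      rw [h0, hp0] at hdet'
      norm_num at hdet'
    · exact ((hα.intCast_mul h0).sub_intCast (p' + a * p)).ne_zero h
  refine ⟨a, ha1, hdet', ?_, ?_⟩
  all_goals rw [hE]
  · rcases lt_or_gt_of_ne he0 with h | h
    · have : 0 < e' := by nlinarith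
      rw [abs_of_neg h, abs_of_pos this] at *
      rw [abs_lt]; constructor <;> linarith
    · have : e' < 0 := by nlinarith
      rw [abs_of_pos h, abs_of_neg this] at *
      rw [abs_lt]; constructor <;> linarith
  · rcases lt_or_gt_of_ne he0 with h | h
    · have : 0 < e' := by nlinarith
      rw [abs_of_neg h, abs_of_pos this] at *
      have : 0 < e' + a * e := lt_of_le_of_ne (by linarith) hne.symm
      nlinarith
    · have : e' < 0 := by nlinarith
      rw [abs_of_pos h, abs_of_neg this] at *
      have : e' + a * e < 0 := lt_of_le_of_ne (by linarith) hne
      nlinarith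

/-- Two consecutive convergents of `α`, with `v.1 = (q', p')` and `v.2 = (q, p)`. -/
def IsConvergentPair (α : ℝ) (v : (ℤ × ℤ) × (ℤ × ℤ)) : Prop :=
  0 ≤ v.1.1 ∧ 1 ≤ v.2.1 ∧ v.1.1 ≤ v.2.1 ∧ (v.2.1 * v.1.2 - v.2.2 * v.1.1) ^ 2 = 1 ∧
    |v.2.1 * α - v.2.2| < |v.1.1 * α - v.1.2| ∧
    (v.2.1 * α - v.2.2) * (v.1.1 * α - v.1.2) < 0

/-- `q` and `p` are the denominators and numerators of consecutive convergents of `α`. -/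
structure IsConvergentSeq (α : ℝ) (q p : ℕ → ℤ) : Prop where
  one_le : ∀ k, 1 ≤ q k
  mono : Monotone q
  le_den : ∀ k : ℕ, (k : ℤ) ≤ q k
  det_sq : ∀ k, (q (k + 1) * p k - p (k + 1) * q k) ^ 2 = 1
  upper : ∀ k, |q k * α - p k| * q (k + 1) ≤ 1
  lower : ∀ k, 1 ≤ 2 * (|q k * α - p k| * q (k + 1))

lemma exists_isConvergentSeq {α : ℝ} (hα : Irrational α) :
    ∃ q p : ℕ → ℤ, IsConvergentSeq α q p := by
  have hstep : ∀ v : {v // IsConvergentPair α v}, ∃ w : {v // IsConvergentPair α v},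
      w.1.1 = v.1.2 ∧ v.1.1.1 + v.1.2.1 ≤ w.1.2.1 := by
    rintro ⟨⟨⟨q', p'⟩, ⟨q, p⟩⟩, h0, h1, h2, h3, h4, h5⟩
    dsimp only at h0 h1 h2 h3 h4 h5
    obtain ⟨a, ha, hd, hl, hs⟩ := exists_next_convergent hα h3 h4 h5
    refine ⟨⟨⟨⟨q, p⟩, ⟨q' + a * q, p' + a * p⟩⟩, ?_, ?_, ?_, hd, hl, hs⟩, rfl, ?_⟩ <;>
      dsimp only <;> nlinarith
  choose next hn1 hn2 using hstep
  have hinit : IsConvergentPair α ((0, 1), (1, ⌊α⌋)) := by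
    have hf : 0 < α - ⌊α⌋ :=
      lt_of_le_of_ne (sub_nonneg.2 (Int.floor_le α)) (hα.sub_intCast _).ne_zero.symm
    have hf1 : α - ⌊α⌋ < 1 := by linarith [Int.lt_floor_add_one α]
    refine ⟨by norm_num, by norm_num, by norm_num, by norm_num, ?_, ?_⟩
    · simpa only [Int.cast_one, one_mul, Int.cast_zero, zero_mul, zero_sub, abs_neg, abs_one,
        abs_of_pos hf] using hf1
    · simpa using hf
  let v : ℕ → {v // IsConvergentPair α v} := fun n => next^[n] ⟨_, hinit⟩
  have hv : ∀ n, v (n + 1) = next (v n) := fun n => Function.iterate_succ_apply' _ _ _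
  have hfst : ∀ n, (v (n + 1)).1.1 = (v n).1.2 := fun n => by rw [hv, hn1]
  have hone : ∀ k, 1 ≤ (v k).1.2.1 := fun k => (v k).2.2.1
  have hid : ∀ k, |((v k).1.2.1 : ℝ) * α - (v k).1.2.2| * (v (k + 1)).1.2.1 ≤ 1 ∧
      1 ≤ 2 * (|((v k).1.2.1 : ℝ) * α - (v k).1.2.2| * (v (k + 1)).1.2.1) := by
    intro k
    obtain ⟨h0, h1, h2, h3, h4, h5⟩ := (v (k + 1)).2
    rw [hfst] at h0 h2 h3 h4 h5
    have h3' : (((v (k + 1)).1.2.1 : ℝ) * (v k).1.2.2 -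
      (v (k + 1)).1.2.2 * (v k).1.2.1) ^ 2 = 1 := by exact_mod_cast h3
    have h0' : (0 : ℝ) ≤ (v k).1.2.1 := by exact_mod_cast h0
    have h1' : (1 : ℝ) ≤ (v (k + 1)).1.2.1 := by exact_mod_cast h1
    have h2' : ((v k).1.2.1 : ℝ) ≤ (v (k + 1)).1.2.1 := by exact_mod_cast h2
    generalize ((v (k + 1)).1.2.1 : ℝ) = Q at *
    generalize ((v k).1.2.1 : ℝ) = q at *
    generalize ((v (k + 1)).1.2.2 : ℝ) = P at *
    generalize ((v k).1.2.2 : ℝ) = p at *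
    have hsum : |q * α - p| * Q + q * |Q * α - P| = 1 := by
      have hsq : (Q * (q * α - p) - q * (Q * α - P)) ^ 2 = 1 := by
        linear_combination h3'
      rcases lt_or_ge (q * α - p) 0 with h | h
      · have h' : 0 < Q * α - P := by nlinarith
        rw [abs_of_neg h, abs_of_pos h']
        have : 0 ≤ -(q * α - p) * Q + q * (Q * α - P) := by
          have := mul_nonneg (neg_nonneg.2 h.le) (by linarith : 0 ≤ Q)
          have := mul_nonneg h0' h'.le
          linarith
        nlinarith
      · have h' : Q * α - P < 0 := by nlinarith
        rw [abs_of_nonneg h, abs_of_neg h']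
        have : 0 ≤ (q * α - p) * Q + q * -(Q * α - P) := by
          have := mul_nonneg h (by linarith : 0 ≤ Q)
          have := mul_nonneg h0' (neg_nonneg.2 h'.le)
          linarith
        nlinarith
    have hA := abs_nonneg (Q * α - P)
    constructor
    · nlinarith
    · have : q * |Q * α - P| ≤ Q * |q * α - p| := mul_le_mul h2' h4.le hA (by linarith)
      linarith
  refine ⟨fun k => (v k).1.2.1, fun k => (v k).1.2.2, hone, ?_, ?_, ?_,
    fun k => (hid k).1, fun k => (hid k).2⟩
  · refine monotone_nat_of_le_succ fun k => ?_
    have := (v (k + 1)).2.2.2.1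
    rwa [hfst] at this
  · intro k
    induction k with
    | zero => exact_mod_cast zero_le_one.trans (hone 0)
    | succ k ih =>
      rcases k with _ | k
      · exact_mod_cast hone 1
      · have h := hn2 (v (k + 1))
        rw [← hv, hfst] at h
        have := hone k
        push_cast at ih ⊢
        linarith
  · intro k
    have := (v (k + 1)).2.2.2.2.1
    rwa [hfst] at this

lemma exists_int_approx_ne {e : ℝ} (he : e ≠ 0) (e' c d : ℝ) :
    ∃ l : ℤ, |e' + l * e - c| ≤ |e| ∧ e' + l * e ≠ d := by
  have key : ∀ l : ℤ, |(l : ℝ) - (c - e') / e| ≤ 1 → |e' + l * e - c| ≤ |e| := by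
    intro l hl
    have : e' + l * e - c = (l - (c - e') / e) * e := by field_simp; ring
    rw [this, abs_mul]
    exact mul_le_of_le_one_left (abs_nonneg _) hl
  have h1 := Int.floor_le ((c - e') / e)
  have h2 := Int.lt_floor_add_one ((c - e') / e)
  by_cases h : e' + (⌊(c - e') / e⌋ : ℤ) * e = d
  · refine ⟨⌊(c - e') / e⌋ + 1, key _ ?_, ?_⟩
    · push_cast; rw [abs_le]; constructor <;> linarith
    · rw [← h]; push_cast
      intro h'; apply he; linarith
  · refine ⟨⌊(c - e') / e⌋, key _ ?_, h⟩
    rw [abs_le]; constructor <;> linarith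

lemma abs_entry_le {T T' P P' l σ h k s q Q X Y : ℝ} (hQ : 0 ≤ Q) (hh : 0 ≤ h) (hk : 0 ≤ k)
    (hs : 0 < s) (hq : 0 < q) (hqQ : q ≤ Q) (hX : 0 < X) (hY : 0 ≤ Y) (hσ : |σ| ≤ 1)
    (hT : |T| ≤ (1 + h) * s) (hT' : |T'| ≤ (1 + h) * s)
    (hP : |P| ≤ (1 + k) * q) (hP' : |P'| ≤ (1 + k) * q)
    (hl : |l| ≤ 2 * Q * (Y / (X * s) + 1 / q) + 1) :
    |T * (P' + l * P) + T' * (σ * P)| ≤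
      (1 + h) * (1 + k) * (5 + 2 * (Y / X)) * (Q * (q + s)) := by
  have hσP : |σ * P| ≤ (1 + k) * q := by
    rw [abs_mul]
    exact (mul_le_of_le_one_left (abs_nonneg _) hσ).trans hP
  have hlP : |P' + l * P| ≤
      (1 + k) * q + (2 * Q * (Y / (X * s) + 1 / q) + 1) * ((1 + k) * q) := by
    refine (abs_add_le _ _).trans (add_le_add hP' ?_)
    rw [abs_mul]
    exact mul_le_mul hl hP (abs_nonneg _) (by positivity)
  calc |T * (P' + l * P) + T' * (σ * P)|
      ≤ ((1 + h) * s) * ((1 + k) * q + (2 * Q * (Y / (X * s) + 1 / q) + 1) * ((1 + k) * q)) +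
          ((1 + h) * s) * ((1 + k) * q) := by
        refine (abs_add_le _ _).trans (add_le_add ?_ ?_)
        · rw [abs_mul]
          exact mul_le_mul hT hlP (abs_nonneg _) (by positivity)
        · rw [abs_mul]
          exact mul_le_mul hT' hσP (abs_nonneg _) (by positivity)
    _ = (1 + h) * (1 + k) * (3 * (q * s) + 2 * (Y / X) * (Q * q) + 2 * (Q * s)) := by
        field_simp
        ring
    _ ≤ (1 + h) * (1 + k) * ((5 + 2 * (Y / X)) * (Q * (q + s))) := by
        have h1 : 0 ≤ Q * q := by positivity
        have h2 : 0 ≤ Q * s := by positivity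
        have h3 : 0 ≤ Y / X * (Q * s) := by positivity
        have h4 : q * s ≤ Q * s := by gcongr
        refine mul_le_mul_of_nonneg_left ?_ (by positivity)
        nlinarith
    _ = _ := by ring

lemma abs_le_one_add_mul {u v w m : ℝ} (hu : 0 ≤ u) (hum : u ≤ m) (hm : 1 ≤ m)
    (h : |u * w - v| ≤ 1) : |v| ≤ (1 + |w|) * m := by
  have h1 : v = u * w + -(u * w - v) := by ring
  rw [h1]
  refine (abs_add_le _ _).trans ?_
  rw [abs_neg, abs_mul, abs_of_nonneg hu]
  nlinarith [abs_nonneg w]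

set_option maxHeartbeats 400000 in
/-- The matrix built from convergents `p'/q'`, `p/q` of the slope of `x` and `t'/s'`, `t/s` of the
slope of `y` sends `x` close to `y`. -/
lemma exists_matrix_approx (x y : Fin 2 → ℝ) (hx2 : x 1 ≠ 0) (hy2 : y 1 ≠ 0) :
    ∃ C : ℝ, 1 ≤ C ∧ ∀ (s' s t' t q' q p' p : ℤ) (S Q : ℝ),
      0 ≤ s' → s' ≤ s → 1 ≤ s → 1 ≤ S → 0 ≤ q' → q' ≤ q → 1 ≤ q → q ≤ Q →
      (s * t' - t * s') ^ 2 = 1 → (q * p' - p * q') ^ 2 = 1 →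
      |s' * (y 0 / y 1) - t'| ≤ 1 → |s * (y 0 / y 1) - t| * S ≤ 1 →
      |q' * (x 0 / x 1) - p'| * q ≤ 1 → |q * (x 0 / x 1) - p| * Q ≤ 1 →
      1 ≤ 2 * (|q * (x 0 / x 1) - p| * Q) →
      ∃ γ : Matrix (Fin 2) (Fin 2) ℤ, γ.det = 1 ∧ act γ x ≠ y ∧
        vnorm (act γ x - y) ≤ C * (s / Q + 1 / (s * S)) ∧ mnorm γ ≤ C * (Q * (q + s)) := by
  set ξ := x 0 / x 1 with hξ
  set η := y 0 / y 1 with hη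
  have hx0 : x 0 = x 1 * ξ := by rw [hξ]; field_simp
  have hy0 : y 0 = y 1 * η := by rw [hη]; field_simp
  set X := |x 1| with hX
  set Y := |y 1| with hY
  have hXpos : 0 < X := abs_pos.2 hx2
  have hYpos : 0 < Y := abs_pos.2 hy2
  set C₁ := 2 * X * (1 + |η|) + 2 * X + Y with hC₁
  set C₂ := (1 + |η|) * (1 + |ξ|) * (5 + 2 * (Y / X)) with hC₂
  have hη0 := abs_nonneg η
  have hξ0 := abs_nonneg ξ
  refine ⟨max 1 (max C₁ C₂), le_max_left _ _, ?_⟩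
  intro s' s t' t q' q p' p S Q hs' hs's hs hS hq' hq'q hq hqQ hdN hdM hf' hf he' he heQ
  set e : ℝ := q * ξ - p with hedef
  set e' : ℝ := q' * ξ - p' with hedef'
  set f : ℝ := s * η - t with hfdef
  set f' : ℝ := s' * η - t' with hfdef'
  clear_value e e' f f' ξ η X Y C₁ C₂
  have hsR : (1 : ℝ) ≤ s := by exact_mod_cast hs
  have hqR : (1 : ℝ) ≤ q := by exact_mod_cast hq
  have hsR' : (0 : ℝ) ≤ s' := by exact_mod_cast hs'
  have hqR' : (0 : ℝ) ≤ q' := by exact_mod_cast hq'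
  have hssR : (s' : ℝ) ≤ s := by exact_mod_cast hs's
  have hqqR : (q' : ℝ) ≤ q := by exact_mod_cast hq'q
  have hQ : 1 ≤ Q := hqR.trans hqQ
  have heabs : |e| ≤ 1 / Q := by rw [le_div_iff₀ (by linarith)]; exact he
  have he1 : |e| ≤ 1 := heabs.trans ((div_le_one (by linarith)).2 hQ)
  have he1' : |e'| ≤ 1 / q := by rw [le_div_iff₀ (by linarith)]; exact he'
  have he'1 : |e'| ≤ 1 := he1'.trans ((div_le_one (by linarith)).2 hqR)
  have hfabs : |f| ≤ 1 / S := by rw [le_div_iff₀ (by linarith)]; exact hf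
  have hf1 : |f| ≤ 1 := hfabs.trans ((div_le_one (by linarith)).2 hS)
  have he0 : e ≠ 0 := by intro h; rw [h] at heQ; norm_num at heQ
  set σ : ℤ := (t * s' - t' * s) * (p' * q - q' * p) with hσ
  have hσ1 : (t * s' - t' * s) * σ * (p' * q - q' * p) = 1 := by
    rw [hσ]
    linear_combination (s * t' - t * s') ^ 2 * hdM + hdN
  have hσabs : |(σ : ℝ)| = 1 := by
    have : IsUnit σ := by
      refine IsUnit.of_mul_eq_one σ ?_
      rw [hσ]
      linear_combination (s * t' - t * s') ^ 2 * hdM + hdN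
    rcases Int.isUnit_iff.1 this with h | h <;> simp [h]
  clear_value σ
  obtain ⟨l, hl, hne⟩ := exists_int_approx_ne he0 e' (y 1 / (x 1 * s))
    ((y 1 / x 1 - s' * (σ * e)) / s)
  set a : ℝ := e' + l * e with ha
  have hact0 : act (!![t, t'; s, s'] * !![1, l; 0, σ] * !![q', -p'; q, -p]) x 0 =
      x 1 * (t * a + t' * (σ * e)) := by
    simp [act, Matrix.mulVec, dotProduct, Fin.sum_univ_two, hx0, ha, hedef,
      hedef']
    ring
  have hact1 : act (!![t, t'; s, s'] * !![1, l; 0, σ] * !![q', -p'; q, -p]) x 1 =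
      x 1 * (s * a + s' * (σ * e)) := by
    simp [act, Matrix.mulVec, dotProduct, Fin.sum_univ_two, hx0, ha, hedef,
      hedef']
    ring
  refine ⟨!![t, t'; s, s'] * !![1, l; 0, σ] * !![q', -p'; q, -p], ?_, ?_, ?_, ?_⟩
  · rw [Matrix.det_mul, Matrix.det_mul]
    simp only [Matrix.det_fin_two_of]
    linear_combination hσ1
  · intro h
    have h1 := congrFun h 1
    rw [hact1] at h1
    apply hne
    rw [← h1]
    field_simp
    ring
  · have hsecond : |x 1 * (s * a + s' * (σ * e)) - y 1| ≤ 2 * X * (s / Q) := by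
      have : x 1 * (s * a + s' * (σ * e)) - y 1 =
          x 1 * (s * (a - y 1 / (x 1 * s)) + s' * (σ * e)) := by
        field_simp
        ring
      rw [this, abs_mul, ← hX]
      have h1 : |s * (a - y 1 / (x 1 * s)) + s' * (σ * e)| ≤ s * |e| + s * |e| := by
        refine (abs_add_le _ _).trans (add_le_add ?_ ?_)
        · rw [abs_mul, abs_of_nonneg (by linarith : (0 : ℝ) ≤ s)]
          gcongr
        · rw [abs_mul, abs_mul, hσabs, one_mul, abs_of_nonneg hsR']
          gcongr
      calc X * _ ≤ X * (s * |e| + s * |e|) := by gcongr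
        _ ≤ X * (s * (1 / Q) + s * (1 / Q)) := by gcongr
        _ = _ := by ring
    have hsQ : 1 / Q ≤ s / Q := by gcongr
    have ha' : |a| ≤ Y / (X * s) + |e| := by
      have h1 : |y 1 / (x 1 * s)| = Y / (X * s) := by
        rw [abs_div, abs_mul, abs_of_nonneg (by linarith : (0 : ℝ) ≤ s), ← hX, ← hY]
      have := abs_add_le (a - y 1 / (x 1 * s)) (y 1 / (x 1 * s))
      rw [sub_add_cancel, h1] at this
      linarith
    have hfirst : |x 1 * (t * a + t' * (σ * e)) - y 0| ≤
        |η| * (2 * X * (s / Q)) + Y * (1 / (s * S)) + 2 * X * (s / Q) := by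
      have : x 1 * (t * a + t' * (σ * e)) - y 0 =
          η * (x 1 * (s * a + s' * (σ * e)) - y 1) + -(x 1 * (f * a + f' * (σ * e))) := by
        rw [hy0, hfdef, hfdef']; ring
      rw [this]
      refine (abs_add_le _ _).trans ?_
      rw [abs_neg, abs_mul, abs_mul]
      have h1 : |f * a + f' * (σ * e)| ≤ (1 / S * (Y / (X * s)) + |e|) + |e| := by
        refine (abs_add_le _ _).trans (add_le_add ?_ ?_)
        · rw [abs_mul]
          calc |f| * |a| ≤ |f| * (Y / (X * s) + |e|) := by gcongr
            _ = |f| * (Y / (X * s)) + |f| * |e| := by ring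
            _ ≤ _ := by
              gcongr
              exact mul_le_of_le_one_left (abs_nonneg _) hf1
        · rw [abs_mul, abs_mul, hσabs, one_mul]
          exact mul_le_of_le_one_left (abs_nonneg _) hf'
      have h2 : X * |f * a + f' * (σ * e)| ≤ Y * (1 / (s * S)) + 2 * X * (s / Q) := by
        calc X * |f * a + f' * (σ * e)| ≤ X * ((1 / S * (Y / (X * s)) + |e|) + |e|) := by gcongr
          _ = Y * (1 / (s * S)) + 2 * X * |e| := by field_simp; ring
          _ ≤ _ := by gcongr; exact heabs.trans hsQ
      have h3 := mul_le_mul_of_nonneg_left hsecond hη0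
      rw [← hX]
      linarith
    have hu : 0 ≤ s / Q := by positivity
    have hw : 0 ≤ 1 / (s * S) := by positivity
    refine le_trans ?_ (mul_le_mul_of_nonneg_right
      ((le_max_left C₁ C₂).trans (le_max_right _ _)) (add_nonneg hu hw))
    simp only [vnorm, Pi.sub_apply, hact0, hact1]
    have e1 : 0 ≤ X * (1 + |η|) * (1 / (s * S)) := by positivity
    have e2 : 0 ≤ X * (1 / (s * S)) := by positivity
    have e3 : 0 ≤ Y * (s / Q) := by positivity
    have e4 : 0 ≤ X * |η| * (s / Q) := by positivity
    have e5 : 0 ≤ X * (s / Q) := by positivity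
    have e6 : 0 ≤ Y * (1 / (s * S)) := by positivity
    rw [hC₁]
    generalize (s : ℝ) / Q = u at *
    generalize 1 / ((s : ℝ) * S) = v at *
    have hexp : (2 * X * (1 + |η|) + 2 * X + Y) * (u + v) = |η| * (2 * X * u) + 4 * (X * u) +
        Y * u + 2 * (X * (1 + |η|) * v) + 2 * (X * v) + Y * v := by ring
    rw [hexp]
    have e7 : |η| * (2 * X * u) = 2 * (X * |η| * u) := by ring
    have e8 : 2 * X * u = 2 * (X * u) := by ring
    apply max_le <;> linarith
  · have hlabs : |(l : ℝ)| ≤ 2 * Q * (Y / (X * s) + 1 / q) + 1 := by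
      have h1 : |y 1 / (x 1 * s)| = Y / (X * s) := by
        rw [abs_div, abs_mul, abs_of_nonneg (by linarith : (0 : ℝ) ≤ s), ← hX, ← hY]
      have h2 : |(l : ℝ) * e| ≤ |e| + Y / (X * s) + 1 / q := by
        have h3 : (l : ℝ) * e = (a - y 1 / (x 1 * s)) + y 1 / (x 1 * s) + -e' := by
          rw [ha]; ring
        rw [h3]
        refine (abs_add_three _ _ _).trans ?_
        rw [abs_neg, h1]
        gcongr
      rw [abs_mul] at h2
      have hB : 0 ≤ Y / (X * s) + 1 / q := by positivity
      have hepos : 0 < |e| := abs_pos.2 he0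
      refine le_of_mul_le_mul_right ?_ hepos
      have h4 := le_mul_of_one_le_left hB heQ
      have h5 : (2 * Q * (Y / (X * s) + 1 / q) + 1) * |e| =
          2 * (|e| * Q) * (Y / (X * s) + 1 / q) + |e| := by ring
      rw [h5]
      linarith
    have hrow : |(t : ℝ)| ≤ (1 + |η|) * s ∧ |(t' : ℝ)| ≤ (1 + |η|) * s ∧
        |(p : ℝ)| ≤ (1 + |ξ|) * q ∧ |(p' : ℝ)| ≤ (1 + |ξ|) * q := by
      exact ⟨abs_le_one_add_mul (by linarith) le_rfl hsR (hfdef ▸ hf1),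
        abs_le_one_add_mul hsR' hssR hsR (hfdef' ▸ hf'),
        abs_le_one_add_mul (by linarith) le_rfl hqR (hedef ▸ he1),
        abs_le_one_add_mul hqR' hqqR hqR (hedef' ▸ he'1)⟩
    obtain ⟨ht, ht', hp, hp'⟩ := hrow
    have hbound : ∀ T T' P P' : ℝ, |T| ≤ (1 + |η|) * s → |T'| ≤ (1 + |η|) * s →
        |P| ≤ (1 + |ξ|) * q → |P'| ≤ (1 + |ξ|) * q →
        |T * (P' + l * P) + T' * (σ * P)| ≤ max 1 (max C₁ C₂) * (Q * (q + s)) := by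
      intro T T' P P' hT hT' hP hP'
      refine (abs_entry_le (by linarith) hη0 hξ0 (by linarith) (by linarith) hqQ hXpos
        hYpos.le hσabs.le hT hT' hP hP' hlabs).trans ?_
      rw [← hC₂]
      exact mul_le_mul_of_nonneg_right ((le_max_right C₁ C₂).trans (le_max_right _ _))
        (by positivity)
    have hs1 : |(s : ℝ)| ≤ (1 + |η|) * s := by
      rw [abs_of_nonneg (by linarith)]
      exact le_mul_of_one_le_left (by linarith) (by linarith)
    have hs1' : |(s' : ℝ)| ≤ (1 + |η|) * s := by
      rw [abs_of_nonneg hsR']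
      exact hssR.trans (le_mul_of_one_le_left (by linarith) (by linarith))
    have hq1 : |(q : ℝ)| ≤ (1 + |ξ|) * q := by
      rw [abs_of_nonneg (by linarith)]
      exact le_mul_of_one_le_left (by linarith) (by linarith)
    have hq1' : |(q' : ℝ)| ≤ (1 + |ξ|) * q := by
      rw [abs_of_nonneg hqR']
      exact hqqR.trans (le_mul_of_one_le_left (by linarith) (by linarith))
    have b00 := hbound t t' q q' ht ht' hq1 hq1'
    have b01 := hbound t t' (-p) (-p') ht ht' (by rwa [abs_neg]) (by rwa [abs_neg])
    have b10 := hbound s s' q q' hs1 hs1' hq1 hq1'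
    have b11 := hbound s s' (-p) (-p') hs1 hs1' (by rwa [abs_neg]) (by rwa [abs_neg])
    refine max_le (max_le ?_ ?_) (max_le ?_ ?_)
    · have h : (((!![t, t'; s, s'] * !![1, l; 0, σ] * !![q', -p'; q, -p]) 0 0 : ℤ) : ℝ) =
          t * (q' + l * q) + t' * (σ * q) := by
        simp [Matrix.mul_apply, Fin.sum_univ_two]
        ring
      rw [h]
      exact b00
    · have h : (((!![t, t'; s, s'] * !![1, l; 0, σ] * !![q', -p'; q, -p]) 0 1 : ℤ) : ℝ) =
          t * ((-p') + l * (-p)) + t' * (σ * (-p)) := by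
        simp [Matrix.mul_apply, Fin.sum_univ_two]
        ring
      rw [h]
      exact b01
    · have h : (((!![t, t'; s, s'] * !![1, l; 0, σ] * !![q', -p'; q, -p]) 1 0 : ℤ) : ℝ) =
          s * (q' + l * q) + s' * (σ * q) := by
        simp [Matrix.mul_apply, Fin.sum_univ_two]
        ring
      rw [h]
      exact b10
    · have h : (((!![t, t'; s, s'] * !![1, l; 0, σ] * !![q', -p'; q, -p]) 1 1 : ℤ) : ℝ) =
          s * ((-p') + l * (-p)) + s' * (σ * (-p)) := by
        simp [Matrix.mul_apply, Fin.sum_univ_two]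
        ring
      rw [h]
      exact b11

lemma IsConvergentSeq.one_le_real {α : ℝ} {q p : ℕ → ℤ} (h : IsConvergentSeq α q p) (k : ℕ) :
    (1 : ℝ) ≤ q k := by
  exact_mod_cast h.one_le k

lemma IsConvergentSeq.le_succ {α : ℝ} {q p : ℕ → ℤ} (h : IsConvergentSeq α q p) (k : ℕ) :
    (q k : ℝ) ≤ q (k + 1) := by
  exact_mod_cast h.mono k.le_succ

lemma IsConvergentSeq.tendsto {α : ℝ} {q p : ℕ → ℤ} (h : IsConvergentSeq α q p) :
    Filter.Tendsto (fun k => (q k : ℝ)) Filter.atTop Filter.atTop :=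
  Filter.tendsto_atTop_mono (fun k => by exact_mod_cast h.le_den k)
    tendsto_natCast_atTop_atTop

lemma exists_matrix_of_convergents {x y : Fin 2 → ℝ} (hx2 : x 1 ≠ 0) (hy2 : y 1 ≠ 0)
    {q p s t : ℕ → ℤ} (hq : IsConvergentSeq (x 0 / x 1) q p)
    (hs : IsConvergentSeq (y 0 / y 1) s t) :
    ∃ C : ℝ, 1 ≤ C ∧ ∀ j k : ℕ, ∃ γ : Matrix (Fin 2) (Fin 2) ℤ, γ.det = 1 ∧ act γ x ≠ y ∧
      vnorm (act γ x - y) ≤ C * (s (j + 1) / q (k + 2) + 1 / (s (j + 1) * s (j + 2))) ∧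
      mnorm γ ≤ C * (q (k + 2) * (q (k + 1) + s (j + 1))) := by
  obtain ⟨C, hC, h⟩ := exists_matrix_approx x y hx2 hy2
  refine ⟨C, hC, fun j k => ?_⟩
  refine h (s j) (s (j + 1)) (t j) (t (j + 1)) (q k) (q (k + 1)) (p k) (p (k + 1))
    (s (j + 2)) (q (k + 2)) (zero_le_one.trans (hs.one_le _)) (hs.mono j.le_succ) (hs.one_le _)
    (hs.one_le_real _) (zero_le_one.trans (hq.one_le _)) (hq.mono k.le_succ) (hq.one_le _)
    (hq.le_succ _) (hs.det_sq j) (hq.det_sq k) ?_ (hs.upper _) (hq.upper k) (hq.upper _)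
    (hq.lower _)
  exact (le_mul_of_one_le_right (abs_nonneg _) (hs.one_le_real _)).trans (hs.upper j)

lemma IsConvergentSeq.infinite_of_forall_mem {α : ℝ} {q p : ℕ → ℤ} (h : IsConvergentSeq α q p)
    {S : Set (ℤ × ℤ)} (hS : ∀ N : ℕ, ∃ k ≥ N, (q k, -p k) ∈ S) : S.Infinite := by
  intro hfin
  obtain ⟨B, hB⟩ := (hfin.image Prod.fst).bddAbove
  obtain ⟨k, hk, hmem⟩ := hS (B.toNat + 1)
  have h1 : q k ≤ B := hB ⟨_, hmem, rfl⟩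
  have h2 := h.le_den k
  omega

lemma one_mem_omegaSet {α : ℝ} (hα : Irrational α) : 1 ∈ omegaSet α := by
  obtain ⟨q, p, h⟩ := exists_isConvergentSeq hα
  refine h.infinite_of_forall_mem fun N => ⟨N, le_rfl, ?_⟩
  have h1 := h.one_le_real N
  rw [Set.mem_ofPred_eq, abs_of_nonneg (by linarith : (0 : ℝ) ≤ q N), Real.rpow_neg_one,
    ← one_div, le_div_iff₀ (by linarith)]
  push_cast
  rw [← sub_eq_add_neg]
  exact (mul_le_mul_of_nonneg_left (h.le_succ N) (abs_nonneg _)).trans (h.upper N)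

lemma IsConvergentSeq.eventually_succ_lt_rpow {α w : ℝ} {q p : ℕ → ℤ}
    (h : IsConvergentSeq α q p) (hw : w ∉ omegaSet α) :
    ∃ K : ℕ, ∀ k ≥ K, (q (k + 1) : ℝ) < (q k : ℝ) ^ w := by
  by_contra! hcon
  refine hw (h.infinite_of_forall_mem fun N => ?_)
  obtain ⟨k, hk, hle⟩ := hcon N
  refine ⟨k, hk, ?_⟩
  have h1 := h.one_le_real k
  have hpos : 0 < (q k : ℝ) ^ w := Real.rpow_pos_of_pos (by linarith) _
  rw [Set.mem_ofPred_eq, abs_of_nonneg (by linarith : (0 : ℝ) ≤ q k),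
    Real.rpow_neg (by linarith), ← one_div, le_div_iff₀ hpos]
  push_cast
  rw [← sub_eq_add_neg]
  exact (mul_le_mul_of_nonneg_left hle (abs_nonneg _)).trans (h.upper k)

lemma exists_le_lt_succ {f : ℕ → ℝ} (hf : Filter.Tendsto f Filter.atTop Filter.atTop)
    {K : ℕ} {X : ℝ} (hK : f K ≤ X) : ∃ k ≥ K, f k ≤ X ∧ X < f (k + 1) := by
  by_contra! hcon
  have hle : ∀ k ≥ K, f k ≤ X := fun k hk => by
    induction k, hk using Nat.le_induction with
    | base => exact hK
    | succ k hk ih => exact hcon k hk ih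
  obtain ⟨k, hk, hX⟩ := ((Filter.eventually_ge_atTop K).and (hf.eventually_gt_atTop X)).exists
  exact hX.not_ge (hle k hk)

lemma eventually_mul_rpow_neg_le {A B a b : ℝ} (hA : 0 < A) (hB : 0 < B) (hab : a < b) :
    ∀ᶠ Z : ℝ in Filter.atTop, A * Z ^ (-b) ≤ (B * Z) ^ (-a) := by
  have h := tendsto_rpow_neg_atTop (sub_pos.2 hab)
  have hpos : 0 < B ^ (-a) / A := div_pos (Real.rpow_pos_of_pos hB _) hA
  filter_upwards [h.eventually_le_const hpos, Filter.eventually_gt_atTop 0] with Z hZ hZ0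
  rw [Real.mul_rpow hB.le hZ0.le, show -b = -(b - a) + -a by ring, Real.rpow_add hZ0, ← mul_assoc]
  gcongr
  rwa [le_div_iff₀' hA] at hZ

lemma one_le_mnorm {γ : Matrix (Fin 2) (Fin 2) ℤ} (h : γ.det = 1) : 1 ≤ mnorm γ := by
  have key : ∀ n : ℤ, n ≠ 0 → (1 : ℝ) ≤ |(n : ℝ)| := fun n hn => by
    exact_mod_cast Int.one_le_abs hn
  rw [Matrix.det_fin_two] at h
  by_cases h0 : γ 0 0 = 0
  · have h1 : γ 0 1 ≠ 0 := by rintro h1; simp [h0, h1] at h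
    exact (key _ h1).trans ((le_max_right _ _).trans (le_max_left _ _))
  · exact (key _ h0).trans ((le_max_left _ _).trans (le_max_left _ _))

lemma vnorm_sub_pos {u v : Fin 2 → ℝ} (h : u ≠ v) : 0 < vnorm (u - v) := by
  by_contra! hle
  apply h
  have h0 : |(u - v) 0| ≤ 0 := (le_max_left _ _).trans hle
  have h1 : |(u - v) 1| ≤ 0 := (le_max_right _ _).trans hle
  simp only [Pi.sub_apply, abs_nonpos_iff, sub_eq_zero] at h0 h1
  ext i
  fin_cases i
  · exact h0
  · exact h1

lemma infinite_of_exists_vnorm_lt {x y : Fin 2 → ℝ} {S : Set (Matrix (Fin 2) (Fin 2) ℤ)}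
    (h : ∀ δ > 0, ∃ γ ∈ S, act γ x ≠ y ∧ vnorm (act γ x - y) < δ) : S.Infinite := by
  intro hfin
  have hfin' := (hfin.subset (Set.sep_subset S (fun γ => act γ x ≠ y)))
  obtain ⟨γ₀, hγ₀, hne₀, -⟩ := h 1 one_pos
  obtain ⟨γ₁, hγ₁, hmin⟩ := Set.exists_min_image _ (fun γ => vnorm (act γ x - y)) hfin'
    ⟨γ₀, hγ₀, hne₀⟩
  obtain ⟨γ, hγ, hne, hlt⟩ := h _ (vnorm_sub_pos hγ₁.2)
  exact hlt.not_ge (hmin γ ⟨hγ, hne⟩)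

lemma le_rpow_of_log_le {u Q c : ℝ} (hu : 0 < u) (hQ : 0 < Q)
    (h : Real.log u ≤ c * Real.log Q) : u ≤ Q ^ c := by
  rw [← Real.log_le_log_iff hu (Real.rpow_pos_of_pos hQ _), Real.log_rpow hQ]
  exact h

lemma mem_muSet_of_lt {x y : Fin 2 → ℝ} (hx2 : x 1 ≠ 0) (hξ : Irrational (x 0 / x 1))
    (hy2 : y 1 ≠ 0) (hη : Irrational (y 0 / y 1)) {μ : ℝ} (hμ : μ < 1 / 3) : μ ∈ muSet x y := by
  obtain ⟨q, p, hq⟩ := exists_isConvergentSeq hξ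
  obtain ⟨s, t, hs⟩ := exists_isConvergentSeq hη
  obtain ⟨C, hC, hγ⟩ := exists_matrix_of_convergents hx2 hy2 hq hs
  refine infinite_of_exists_vnorm_lt (x := x) (y := y) fun δ hδ => ?_
  have hν : max μ 0 < 1 / 3 := max_lt hμ (by norm_num)
  have hlim : Filter.Tendsto (fun Z : ℝ => 2 * C * Z ^ (-(1 / 3) : ℝ)) Filter.atTop (nhds 0) := by
    simpa using (tendsto_rpow_neg_atTop (by norm_num : (0 : ℝ) < 1 / 3)).const_mul (2 * C)
  obtain ⟨Z₀, hZ₀⟩ := Filter.eventually_atTop.1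
    ((eventually_mul_rpow_neg_le (by linarith : 0 < 2 * C) (by linarith : 0 < 2 * C) hν).and
      (hlim.eventually_lt_const hδ))
  have hcube : Filter.Tendsto (fun j => (s (j + 1) : ℝ) ^ 3) Filter.atTop Filter.atTop :=
    (Filter.tendsto_pow_atTop (by norm_num)).comp
      (hs.tendsto.comp (Filter.tendsto_add_atTop_nat 1))
  obtain ⟨N, hN1, hN2⟩ := ((hcube.eventually_ge_atTop (q 1 : ℝ)).and
    (hcube.eventually_ge_atTop Z₀)).exists
  obtain ⟨k, -, hk1, hk2⟩ := exists_le_lt_succ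
    (hq.tendsto.comp (Filter.tendsto_add_atTop_nat 1)) (K := 0) (X := (s (N + 1) : ℝ) ^ 3) hN1
  obtain ⟨j, hj, hj1, hj2⟩ := exists_le_lt_succ hcube (K := N) (X := q (k + 2)) hk2.le
  simp only [Function.comp_apply] at hk1
  have hmono : (s (N + 1) : ℝ) ≤ s (j + 1) := by exact_mod_cast hs.mono (by omega)
  obtain ⟨γ, hdet, hne, hv, hm⟩ := hγ j k
  have hs1 := hs.one_le_real (j + 1)
  have hS1 := hs.one_le_real (j + 2)
  have hq1 := hq.one_le_real (k + 1)
  have hQ1 := hq.one_le_real (k + 2)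
  have hsN : (s (N + 1) : ℝ) ^ 3 ≤ (s (j + 1) : ℝ) ^ 3 :=
    pow_le_pow_left₀ (by linarith [hs.one_le_real (N + 1)]) hmono 3
  have hqs : (q (k + 1) : ℝ) ≤ (s (j + 1) : ℝ) ^ 3 := hk1.trans hsN
  generalize (s (j + 1) : ℝ) = σ at *
  change (q (k + 2) : ℝ) < (s (j + 2) : ℝ) ^ 3 at hj2
  generalize (s (j + 2) : ℝ) = S at *
  generalize (q (k + 1) : ℝ) = κ at *
  generalize (q (k + 2) : ℝ) = Q at *
  have hσ3 : 1 ≤ σ ^ 3 := one_le_pow₀ hs1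
  have hσσ3 : σ ≤ σ ^ 3 := le_self_pow₀ hs1 (by norm_num)
  have hZpos : 0 < Q * σ ^ 3 := by positivity
  have hZ := hZ₀ (Q * σ ^ 3) (hN2.trans (hsN.trans (le_mul_of_one_le_left (by linarith) hQ1)))
  have hroot : ∀ u : ℝ, 0 < u → u ^ 3 * (Q * σ ^ 3) ≤ 1 → u ≤ (Q * σ ^ 3) ^ (-(1 / 3) : ℝ) := by
    intro u hu h
    apply le_rpow_of_log_le hu hZpos
    have := Real.log_nonpos (by positivity) h
    rw [Real.log_mul (by positivity) (by positivity), Real.log_pow] at this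
    push_cast at this
    linarith
  have h1 : σ / Q ≤ (Q * σ ^ 3) ^ (-(1 / 3) : ℝ) := by
    apply hroot _ (by positivity)
    have : (σ / Q) ^ 3 * (Q * σ ^ 3) = (σ ^ 3 / Q) ^ 2 := by field_simp
    rw [this]
    exact pow_le_one₀ (by positivity) ((div_le_one (by linarith)).2 hj1)
  have h2 : 1 / (σ * S) ≤ (Q * σ ^ 3) ^ (-(1 / 3) : ℝ) := by
    apply hroot _ (by positivity)
    have : (1 / (σ * S)) ^ 3 * (Q * σ ^ 3) = Q / S ^ 3 := by field_simp
    rw [this]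
    exact (div_le_one (by positivity)).2 hj2.le
  have hv' : vnorm (act γ x - y) ≤ 2 * C * (Q * σ ^ 3) ^ (-(1 / 3) : ℝ) := by
    refine hv.trans ?_
    calc C * (σ / Q + 1 / (σ * S)) ≤ C * ((Q * σ ^ 3) ^ (-(1 / 3) : ℝ) +
          (Q * σ ^ 3) ^ (-(1 / 3) : ℝ)) := by gcongr
      _ = _ := by ring
  have hm' : mnorm γ ≤ 2 * C * (Q * σ ^ 3) := by
    refine hm.trans ?_
    calc C * (Q * (κ + σ)) ≤ C * (Q * (σ ^ 3 + σ ^ 3)) := by gcongr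
      _ = _ := by ring
  have hm1 := one_le_mnorm hdet
  refine ⟨γ, ⟨hdet, hv'.trans (hZ.1.trans ?_)⟩, hne, hv'.trans_lt hZ.2⟩
  calc (2 * C * (Q * σ ^ 3)) ^ (-max μ 0) ≤ mnorm γ ^ (-max μ 0) :=
        Real.rpow_le_rpow_of_nonpos (by linarith) hm' (by simp)
    _ ≤ mnorm γ ^ (-μ) := Real.rpow_le_rpow_of_exponent_le hm1 (by simp)

lemma convergent_error_le_rpow {s₀ s S Q w : ℝ} (hs₀ : 1 ≤ s₀) (hs : 1 ≤ s) (hS : 1 ≤ S)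
    (hw : 0 < w) (h₀ : s ≤ s₀ ^ w) (h₁ : S ≤ s ^ w) (hQ : s₀ * s ^ 2 ≤ Q) (hQ' : Q ≤ s * S ^ 2) :
    s / Q + 1 / (s * S) ≤ 2 * Q ^ (-((w + 1) / (2 * w + 1))) := by
  have hQpos : 0 < Q := lt_of_lt_of_le (by positivity) hQ
  have l₀ : Real.log s ≤ w * Real.log s₀ := by
    rw [← Real.log_rpow (by linarith)]
    exact Real.log_le_log (by linarith) h₀
  have l₁ : Real.log S ≤ w * Real.log s := by
    rw [← Real.log_rpow (by linarith)]
    exact Real.log_le_log (by linarith) h₁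
  have l₂ : Real.log s₀ + 2 * Real.log s ≤ Real.log Q := by
    have := Real.log_le_log (by positivity) hQ
    rwa [Real.log_mul (by positivity) (by positivity), Real.log_pow] at this
  have l₃ : Real.log Q ≤ Real.log s + 2 * Real.log S := by
    have := Real.log_le_log hQpos hQ'
    rwa [Real.log_mul (by positivity) (by positivity), Real.log_pow] at this
  have hw1 : 0 < 2 * w + 1 := by linarith
  have e1 : s / Q ≤ Q ^ (-((w + 1) / (2 * w + 1))) := by
    apply le_rpow_of_log_le (by positivity) hQpos
    rw [Real.log_div (by positivity) hQpos.ne', ← neg_div, div_mul_eq_mul_div, le_div_iff₀ hw1]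
    nlinarith
  have e2 : 1 / (s * S) ≤ Q ^ (-((w + 1) / (2 * w + 1))) := by
    apply le_rpow_of_log_le (by positivity) hQpos
    rw [one_div, Real.log_inv, Real.log_mul (by positivity) (by positivity), ← neg_div,
      div_mul_eq_mul_div, le_div_iff₀ hw1]
    nlinarith
  linarith

lemma mem_muHatSet_of_notMem_omegaSet {x y : Fin 2 → ℝ} (hx2 : x 1 ≠ 0)
    (hξ : Irrational (x 0 / x 1)) (hy2 : y 1 ≠ 0) (hη : Irrational (y 0 / y 1)) {w₁ w₂ μ : ℝ}
    (hw₁ : 0 < w₁) (hw₂ : 0 < w₂) (h₁ : w₁ ∉ omegaSet (x 0 / x 1))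
    (h₂ : w₂ ∉ omegaSet (y 0 / y 1)) (hμ : μ < (w₂ + 1) / (2 * w₂ + 1) / (2 * w₁)) :
    μ ∈ muHatSet x y := by
  obtain ⟨q, p, hq⟩ := exists_isConvergentSeq hξ
  obtain ⟨s, t, hs⟩ := exists_isConvergentSeq hη
  obtain ⟨C, hC, hγ⟩ := exists_matrix_of_convergents hx2 hy2 hq hs
  obtain ⟨K, hK⟩ := hq.eventually_succ_lt_rpow h₁
  obtain ⟨J, hJ⟩ := hs.eventually_succ_lt_rpow h₂
  have hC2 : 0 < 2 * C := by linarith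
  obtain ⟨Z₀, hZ₀⟩ := Filter.eventually_atTop.1 (eventually_mul_rpow_neg_le hC2 hC2 hμ)
  have hqt : Filter.Tendsto (fun k => (q (k + 2) : ℝ)) Filter.atTop Filter.atTop :=
    hq.tendsto.comp (Filter.tendsto_add_atTop_nat 2)
  have hf : Filter.Tendsto (fun k => 2 * C * (q (k + 2) : ℝ) ^ 2) Filter.atTop Filter.atTop :=
    ((Filter.tendsto_pow_atTop (by norm_num)).comp hqt).const_mul_atTop hC2
  have hg : Filter.Tendsto (fun j => (s j : ℝ) * (s (j + 1) : ℝ) ^ 2) Filter.atTop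
      Filter.atTop := by
    refine Filter.tendsto_atTop_mono (fun j => ?_) hs.tendsto
    exact le_mul_of_one_le_right (by linarith [hs.one_le_real j])
      (one_le_pow₀ (hs.one_le_real _))
  obtain ⟨K', hK'⟩ := Filter.eventually_atTop.1
    (hqt.eventually_ge_atTop ((s J : ℝ) * (s (J + 1) : ℝ) ^ 2))
  refine ⟨max (2 * C * (q (max K K' + 2) : ℝ) ^ 2) (2 * C * Z₀), fun T hT => ?_⟩
  obtain ⟨k, hk, hT1, hT2⟩ := exists_le_lt_succ hf (K := max K K') ((le_max_left _ _).trans hT)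
  obtain ⟨j, hj, hj1, hj2⟩ := exists_le_lt_succ hg (hK' k ((le_max_right _ _).trans hk))
  obtain ⟨γ, hdet, -, hv, hm⟩ := hγ j k
  have hq1 := hq.one_le_real (k + 1)
  have hQ1 := hq.one_le_real (k + 2)
  have hR1 := hq.one_le_real (k + 3)
  have hqQ := hq.le_succ (k + 1)
  have hR := hK (k + 2) (by omega)
  have hs0 := hs.one_le_real j
  have hs1 := hs.one_le_real (j + 1)
  have hsQ : (s (j + 1) : ℝ) ≤ q (k + 2) := by
    refine le_trans ?_ hj1
    nlinarith
  have herr := convergent_error_le_rpow hs0 hs1 (hs.one_le_real (j + 2)) hw₂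
    (hJ j hj).le (hJ (j + 1) (by omega)).le hj1 hj2.le
  have hTpos : 0 < T := lt_of_lt_of_le (by positivity) hT1
  refine ⟨γ, hdet, ?_, ?_⟩
  · refine hm.trans (le_trans ?_ hT1)
    calc C * ((q (k + 2) : ℝ) * (q (k + 1) + s (j + 1)))
        ≤ C * ((q (k + 2) : ℝ) * (q (k + 2) + q (k + 2))) := by gcongr
      _ = _ := by ring
  · have hZ := hZ₀ (T / (2 * C)) ((le_div_iff₀' hC2).2 ((le_max_right _ _).trans hT))
    rw [mul_div_cancel₀ _ hC2.ne'] at hZ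
    refine (hv.trans (mul_le_mul_of_nonneg_left herr (by linarith))).trans (le_trans ?_ hZ)
    rw [← mul_assoc, mul_comm C 2]
    refine mul_le_mul_of_nonneg_left ?_ hC2.le
    apply le_rpow_of_log_le (by positivity) (by positivity)
    rw [Real.log_rpow (by linarith)]
    have l1 : Real.log (T / (2 * C)) ≤ 2 * Real.log (q (k + 3)) := by
      have := Real.log_le_log (by positivity) ((div_le_iff₀' hC2).2 hT2.le)
      rwa [Real.log_pow] at this
    have l2 : Real.log (q (k + 3)) ≤ w₁ * Real.log (q (k + 2)) := by
      rw [← Real.log_rpow (by linarith)]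
      exact Real.log_le_log (by linarith) hR.le
    have hτ : 0 < (w₂ + 1) / (2 * w₂ + 1) := by positivity
    generalize (w₂ + 1) / (2 * w₂ + 1) = τ at *
    rw [neg_mul, neg_mul, neg_le_neg_iff, div_mul_eq_mul_div, div_le_iff₀ (by linarith)]
    nlinarith

/-- for `x`, `y` with irrational slopes, `μ(x, y) ≥ 1/3` and
`μ̂(x, y) ≥ (ω(y)+1)/(2(2ω(y)+1)ω(ξ)) ≥ 1/(4ω(ξ))`. -/
theorem stmt10 (x y : Fin 2 → ℝ) (hx2 : x 1 ≠ 0) (hξ : Irrational (x 0 / x 1))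
    (hy2 : y 1 ≠ 0) (hyirr : Irrational (y 0 / y 1))
    (wξ wy : ℝ) (hwξ : IsLUB (omegaSet (x 0 / x 1)) wξ)
    (hwy : IsLUB (omegaSet (y 0 / y 1)) wy) :
    (∀ μ : ℝ, μ < 1 / 3 → μ ∈ muSet x y) ∧
      (∀ μ : ℝ, μ < (wy + 1) / (2 * (2 * wy + 1) * wξ) → μ ∈ muHatSet x y) ∧
      1 / (4 * wξ) ≤ (wy + 1) / (2 * (2 * wy + 1) * wξ) := by
  have hξ1 : 1 ≤ wξ := hwξ.1 (one_mem_omegaSet hξ)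
  have hy1 : 1 ≤ wy := hwy.1 (one_mem_omegaSet hyirr)
  refine ⟨fun μ hμ => mem_muSet_of_lt hx2 hξ hy2 hyirr hμ, fun μ hμ => ?_, ?_⟩
  · have hcont : ContinuousAt
        (fun ε : ℝ => (wy + ε + 1) / (2 * (wy + ε) + 1) / (2 * (wξ + ε))) 0 := by
      refine ContinuousAt.div (ContinuousAt.div ?_ ?_ ?_) ?_ ?_
      · fun_prop
      · fun_prop
      · linarith
      · fun_prop
      · linarith
    have h0 : μ < (wy + 0 + 1) / (2 * (wy + 0) + 1) / (2 * (wξ + 0)) := by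
      convert hμ using 1
      rw [add_zero, add_zero, div_div]
      ring_nf
    obtain ⟨ε, hε, hpos⟩ := (((hcont.eventually_const_lt h0).filter_mono
      nhdsWithin_le_nhds).and (self_mem_nhdsWithin (s := Set.Ioi (0 : ℝ)))).exists
    have hpos : 0 < ε := hpos
    refine mem_muHatSet_of_notMem_omegaSet hx2 hξ hy2 hyirr (by linarith) (by linarith)
      (fun h => ?_) (fun h => ?_) hε
    · linarith [hwξ.1 h]
    · linarith [hwy.1 h]
  · rw [div_le_div_iff₀ (by positivity) (by positivity)]
    nlinarith
end

section
/- Let x = (x₁,x₂) with irrational slope ξ = x₁/x₂, |ξ| < 1, |x| = |x₂|, and y = (y₁,y₂) with irrational slope y = y₁/y₂, |y| ≤ 1, |y| = |y₂|. Let t_j/s_j be the convergents of y. For all positive integers j and k there exists γ ∈ SL(2,ℤ) of the form N_j U^ℓ M_k such that | (|y₂|/|x₂|) q_{k−1} q_k − s_j q_k | − 4 s_j q_{k−1} ≤ |γ| ≤ 2(|y₂|/|x₂|) q_{k−1} q_k + 4 s_j q_k and |γx − y| ≤ 2|y₂|/(s_j s_{j+1}) + 5|x₂| s_j / q_k. 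-/
open Matrix MeasureTheory

lemma GenContFract.not_terminatedAt_of_irrational {v : ℝ} (hv : Irrational v) (n : ℕ) :
    ¬(GenContFract.of v).TerminatedAt n := fun h => by
  obtain ⟨c, hc⟩ := GenContFract.exists_rat_eq_of_terminates (v := v) ⟨n, h⟩
  exact hv ⟨c, hc.symm⟩

lemma GenContFract.one_le_of_den (v : ℝ) (n : ℕ) : 1 ≤ (GenContFract.of v).dens n := by
  induction n with
  | zero => simp [GenContFract.zeroth_den_eq_one]
  | succ n ih => exact ih.trans GenContFract.of_den_mono

lemma GenContFract.of_determinant {v : ℝ} (hv : Irrational v) (n : ℕ) :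
    (GenContFract.of v).nums (n + 1) * (GenContFract.of v).dens n -
      (GenContFract.of v).nums n * (GenContFract.of v).dens (n + 1) = (-1) ^ n := by
  have h := SimpContFract.determinant (s := SimpContFract.of v) (n := n)
    (GenContFract.not_terminatedAt_of_irrational hv n)
  change (GenContFract.of v).nums n * (GenContFract.of v).dens (n + 1) -
    (GenContFract.of v).dens n * (GenContFract.of v).nums (n + 1) = (-1) ^ (n + 1) at h
  rw [pow_succ] at h
  linarith

/-- The error `q_n v - p_n` is `(-1) ^ n / D` with `q_{n+1} ≤ D ≤ q_{n+1} + q_n`. -/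
lemma GenContFract.exists_den_mul_sub_num_mul_eq {v : ℝ} (hv : Irrational v) (n : ℕ) :
    ∃ D : ℝ, (GenContFract.of v).dens (n + 1) ≤ D ∧
      D ≤ (GenContFract.of v).dens (n + 1) + (GenContFract.of v).dens n ∧
      ((GenContFract.of v).dens n * v - (GenContFract.of v).nums n) * D = (-1) ^ n := by
  have hnt := GenContFract.not_terminatedAt_of_irrational hv n
  obtain ⟨i', hi'⟩ := Option.ne_none_iff_exists'.mp
    (mt GenContFract.of_terminatedAt_n_iff_succ_nth_intFractPair_stream_eq_none.2 hnt)
  obtain ⟨i, hi, hfr, rfl⟩ := GenContFract.IntFractPair.succ_nth_stream_eq_some_iff.1 hi'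
  have hrec := GenContFract.contsAux_recurrence (g := GenContFract.of v)
    (GenContFract.get?_of_eq_some_of_get?_intFractPair_stream_fr_ne_zero hi hfr) rfl rfl
  have hb : (GenContFract.of v).dens (n + 1) =
      (⌊i.fr⁻¹⌋ : ℝ) * (GenContFract.of v).dens n + ((GenContFract.of v).contsAux n).b := by
    have := congrArg GenContFract.Pair.b hrec
    simpa [GenContFract.IntFractPair.of] using! this
  have h1 := GenContFract.one_le_of_den v n
  have h2 := GenContFract.one_le_of_den v (n + 1)
  have hD : (GenContFract.of v).dens (n + 1) ≤
      i.fr⁻¹ * (GenContFract.of v).dens n + ((GenContFract.of v).contsAux n).b := by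
    rw [hb]
    gcongr
    exact Int.floor_le _
  refine ⟨i.fr⁻¹ * (GenContFract.of v).dens n + ((GenContFract.of v).contsAux n).b, hD, ?_, ?_⟩
  · have := (Int.lt_floor_add_one i.fr⁻¹).le
    rw [hb]
    nlinarith
  · have h := GenContFract.sub_convs_eq hi
    simp only [hfr, if_false] at h
    change v - (GenContFract.of v).nums n / (GenContFract.of v).dens n = (-1) ^ n /
      ((GenContFract.of v).dens n *
        (i.fr⁻¹ * (GenContFract.of v).dens n + ((GenContFract.of v).contsAux n).b)) at h
    generalize i.fr⁻¹ * (GenContFract.of v).dens n + ((GenContFract.of v).contsAux n).b = D at *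
    have hD0 : D ≠ 0 := by linarith
    have hd0 : (GenContFract.of v).dens n ≠ 0 := by linarith
    field_simp at h
    linarith

lemma GenContFract.abs_den_mul_sub_num_mul_le {v : ℝ} (hv : Irrational v) (n : ℕ) :
    |(GenContFract.of v).dens n * v - (GenContFract.of v).nums n| *
      (GenContFract.of v).dens (n + 1) ≤ 1 := by
  obtain ⟨D, hD, -, h⟩ := GenContFract.exists_den_mul_sub_num_mul_eq hv n
  have h0 := GenContFract.one_le_of_den v (n + 1)
  have h' := congrArg abs h
  rw [abs_mul, abs_neg_one_pow, abs_of_nonneg (by linarith : 0 ≤ D)] at h'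
  rw [← h']
  gcongr

/-- Integral convergents of an irrational number in `[-1, 1]` satisfy `|p_n| ≤ q_n`. -/
lemma abs_num_le_den {v : ℝ} (hv : Irrational v) (h1 : |v| ≤ 1) (n : ℕ) (a b : ℤ)
    (ha : (a : ℝ) = (GenContFract.of v).nums n) (hb : (b : ℝ) = (GenContFract.of v).dens n) :
    |(a : ℝ)| ≤ b := by
  have hlt : |v| < 1 := by
    refine h1.lt_of_ne fun h => ?_
    rcases abs_eq (zero_le_one' ℝ) |>.1 h with h | h
    · exact hv.ne_one h
    · exact hv.ne_int (-1) (by simpa using h)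
  have h := GenContFract.abs_den_mul_sub_num_mul_le hv n
  have hq := GenContFract.one_le_of_den v n
  have hq' := GenContFract.one_le_of_den v (n + 1)
  rw [← ha, ← hb] at h
  rw [← hb] at hq
  have he : |(b : ℝ) * v - a| ≤ 1 := by nlinarith [abs_nonneg ((b : ℝ) * v - a)]
  have hbv : |(b : ℝ) * v| < b := by
    rw [abs_mul, abs_of_nonneg (by linarith : (0 : ℝ) ≤ b)]
    nlinarith
  have : |(a : ℝ)| < b + 1 := by
    rw [abs_le] at he
    rw [abs_lt] at hbv ⊢
    constructor <;> linarith
  have : |a| < b + 1 := by exact_mod_cast this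
  exact_mod_cast Int.lt_add_one_iff.1 this

lemma exists_int_abs_mul_add_sub_le {s : ℝ} (hs : 0 < s) (u w : ℝ) :
    ∃ l : ℤ, |s * l + u - w| ≤ s / 2 := by
  refine ⟨round ((w - u) / s), ?_⟩
  have h := abs_sub_round ((w - u) / s)
  have : s * (round ((w - u) / s) : ℝ) + u - w =
      -(s * ((w - u) / s - round ((w - u) / s))) := by
    field_simp
    ring
  rw [this, abs_neg, abs_mul, abs_of_pos hs]
  nlinarith

lemma abs_sub_le_abs_mul_add_mul {D q s r c τ : ℝ} (hq : 0 ≤ q) (hD : q ≤ D) (hs : 0 ≤ s)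
    (hc : 0 ≤ c) (hτ : |τ| = 1) : |(|r| * c * q - s * q)| ≤ |D * (s + τ * r * c)| := by
  have h : |(|r| * c - s)| ≤ |s + τ * r * c| := by
    have h := abs_abs_sub_abs_le (τ * r * c) (-s)
    rw [abs_mul, abs_mul, hτ, one_mul, abs_neg, abs_of_nonneg hs, abs_of_nonneg hc] at h
    rwa [sub_neg_eq_add, add_comm] at h
  rw [abs_mul D, ← sub_mul, abs_mul, abs_of_nonneg hq, mul_comm,
    abs_of_nonneg (hq.trans hD)]
  exact mul_le_mul hD h (abs_nonneg _) (hq.trans hD)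

lemma abs_mul_add_add_le {D s r τ u v δ c : ℝ} (hD : 0 ≤ D) (hs : 0 ≤ s) (hτ : |τ| = 1)
    (hu : |u| ≤ 1) (hv : |v| ≤ c) (hδ : |δ| ≤ s / 2) :
    |D * (s * u + τ * r * v) + τ * v * δ| ≤ D * (s + |r| * c) + c * s / 2 := by
  have hc : 0 ≤ c := (abs_nonneg v).trans hv
  calc |D * (s * u + τ * r * v) + τ * v * δ|
      ≤ |D * (s * u + τ * r * v)| + |τ * v * δ| := abs_add_le _ _
    _ ≤ D * (|s * u| + |τ * r * v|) + |τ * v * δ| := by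
        rw [abs_mul D, abs_of_nonneg hD]
        gcongr
        exact abs_add_le _ _
    _ = D * (s * |u| + |r| * |v|) + |v| * |δ| := by
        simp only [abs_mul, hτ, abs_of_nonneg hs, one_mul]
    _ ≤ D * (s * 1 + |r| * c) + c * (s / 2) := by gcongr
    _ = D * (s + |r| * c) + c * s / 2 := by ring

lemma abs_le_add_of_mul_eq {s a t c u C w : ℝ} (hs : 1 ≤ s) (ht : |t| ≤ s) (hc : |c| ≤ C)
    (hu : |u| ≤ w) (h : s * a = t * c + u) : |a| ≤ C + w := by
  have hw : 0 ≤ w := (abs_nonneg u).trans hu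
  have h1 : s * |a| ≤ s * (C + w) := by
    calc s * |a| = |t * c + u| := by
          rw [← h, abs_mul, abs_of_nonneg (zero_le_one.trans hs)]
      _ ≤ |t| * |c| + |u| := by rw [← abs_mul]; exact abs_add_le _ _
      _ ≤ s * C + w := by gcongr
      _ ≤ s * (C + w) := by nlinarith
  exact le_of_mul_le_mul_left h1 (by linarith)

lemma mul_add_add_le_of_le_add {D q q' r s : ℝ} (hr : 0 ≤ r) (hq' : 1 ≤ q') (hqq : q' ≤ q)
    (hs : 1 ≤ s) (hD : D ≤ q + q') :
    D * (s + r * q') + q' * s / 2 + q' ≤ 2 * r * q' * q + 4 * s * q := by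
  have h1 : D * (s + r * q') ≤ (2 * q) * (s + r * q') := by
    gcongr
    linarith
  have hq : 0 ≤ q := by linarith
  have h2 : q' * s ≤ q * s := by gcongr
  have h3 : q' * 1 ≤ q * s := by gcongr
  have h4 : 0 ≤ q * s := by nlinarith
  linarith

lemma abs_sub_sub_le_abs {D q q' r s τ δ c : ℝ} (hq : 0 ≤ q) (hD : q ≤ D) (hs : 1 ≤ s)
    (hq' : 0 ≤ q') (hτ : |τ| = 1) (hδ : |δ| ≤ s / 2)
    (hc : c = D * (s * 1 + τ * r * q') + τ * q' * δ) :
    |(|r| * q' * q - s * q)| - 4 * s * q' ≤ |c| := by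
  have h := abs_sub_le_abs_mul_add_mul (r := r) hq hD (zero_le_one.trans hs) hq' hτ
  have h2 : |τ * q' * δ| ≤ q' * (s / 2) := by
    rw [abs_mul, abs_mul, hτ, one_mul, abs_of_nonneg hq']
    gcongr
  have h3 : |D * (s + τ * r * q')| ≤ |c| + |τ * q' * δ| := by
    have : D * (s + τ * r * q') = c - τ * q' * δ := by rw [hc]; ring
    rw [this]
    exact abs_sub _ _
  have h4 : 0 ≤ s * q' := by positivity
  linarith

lemma abs_div_le_of_error {X Y s s₁ q t η e z : ℝ} (hs : 1 ≤ s) (hs₁ : 1 ≤ s₁) (hq : 0 < q)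
    (ht : |t| ≤ s) (hη : |s * η - t| * s₁ ≤ 1) (he : 0 ≤ e) (heq : e ≤ 1 / q)
    (hz : |z| ≤ |X| * s / q / 2) :
    |(-(Y * (s * η - t)) + t * z - X * e) / s| ≤
      2 * |Y| / (s * s₁) + 5 * |X| * s / q := by
  have hs0 : 0 < s := zero_lt_one.trans_le hs
  have hs₁0 : 0 < s₁ := zero_lt_one.trans_le hs₁
  rw [abs_div, abs_of_pos hs0, div_le_iff₀ hs0]
  have h1 : |Y * (s * η - t)| ≤ |Y| / (s * s₁) * s := by
    have : |s * η - t| ≤ 1 / s₁ := by rwa [le_div_iff₀ hs₁0]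
    calc |Y * (s * η - t)| ≤ |Y| * (1 / s₁) := by rw [abs_mul]; gcongr
      _ = |Y| / (s * s₁) * s := by field_simp
  have h2 : |t * z| ≤ s * (|X| * s / q / 2) := by
    rw [abs_mul]
    gcongr
  have h3 : |X * e| ≤ |X| * s / q * s := by
    rw [abs_mul, abs_of_nonneg he]
    have hss : 1 ≤ s * s := by nlinarith
    calc |X| * e ≤ |X| * (1 / q) := by gcongr
      _ ≤ |X| * ((s * s) / q) := by gcongr
      _ = |X| * s / q * s := by ring
  have h4 := abs_sub (-(Y * (s * η - t)) + t * z) (X * e)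
  have h5 := abs_add_le (-(Y * (s * η - t))) (t * z)
  rw [abs_neg] at h5
  have h6 : (2 * |Y| / (s * s₁) + 5 * |X| * s / q) * s =
    2 * (|Y| / (s * s₁) * s) + 5 * (|X| * s / q * s) := by ring
  have h7 : 0 ≤ |Y| / (s * s₁) * s := by positivity
  have h8 : 0 ≤ |X| * s / q * s := by positivity
  rw [h6]
  linarith

/-- The theorem for real parameters, with the matrix product written out entry by entry. -/
lemma exists_int_approx {X Y ξ η p p' q q' t t' s s' s₁ σ τ D : ℝ} (hX : X ≠ 0)
    (hq' : 1 ≤ q') (hqq : q' ≤ q) (hp' : |p'| ≤ q') (hξ : |ξ| ≤ 1) (hs : 1 ≤ s) (hs₁ : 1 ≤ s₁)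
    (ht : |t| ≤ s) (hσ : σ * σ = 1) (hτ : τ * τ = 1) (hdx : p * q' - p' * q = τ)
    (hdy : t * s' - t' * s = σ) (hD : q ≤ D) (hD' : D ≤ q + q') (hDe : (q' * ξ - p') * D = τ)
    (hη : |s * η - t| * s₁ ≤ 1) :
    ∃ (l : ℤ) (a b c d : ℝ), a = t * q + (t * l + σ * t') * (τ * q') ∧
      b = -(t * p + (t * l + σ * t') * (τ * p')) ∧ c = s * q + (s * l + σ * s') * (τ * q') ∧
      d = -(s * p + (s * l + σ * s') * (τ * p')) ∧
      |(|Y| / |X|) * q' * q - s * q| - 4 * s * q' ≤ max (max |a| |b|) (max |c| |d|) ∧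
      max (max |a| |b|) (max |c| |d|) ≤ 2 * (|Y| / |X|) * q' * q + 4 * s * q ∧
      max |a * (ξ * X) + b * X - η * Y| |c * (ξ * X) + d * X - Y| ≤
        2 * |Y| / (s * s₁) + 5 * |X| * s / q := by
  have hq0 : 0 < q := by linarith
  have hD0 : 0 < D := by linarith
  have hτ1 : |τ| = 1 := by
    rcases mul_self_eq_one_iff.1 hτ with h | h <;> simp [h]
  obtain ⟨l, hl⟩ := exists_int_abs_mul_add_sub_le (by linarith : 0 < s) (σ * s')
    ((Y / X - s * (q * ξ - p)) * D)
  obtain ⟨δ, hδ⟩ : ∃ δ, δ = s * l + σ * s' - (Y / X - s * (q * ξ - p)) * D := ⟨_, rfl⟩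
  rw [← hδ] at hl
  obtain ⟨r, hr⟩ : ∃ r, r = Y / X := ⟨_, rfl⟩
  have hrabs : |Y| / |X| = |r| := by rw [hr, abs_div]
  have hYr : Y = r * X := by rw [hr]; field_simp
  rw [← hr] at hδ
  obtain ⟨a, ha⟩ : ∃ a, a = t * q + (t * l + σ * t') * (τ * q') := ⟨_, rfl⟩
  obtain ⟨b, hb⟩ : ∃ b, b = -(t * p + (t * l + σ * t') * (τ * p')) := ⟨_, rfl⟩
  obtain ⟨c, hc⟩ : ∃ c, c = s * q + (s * l + σ * s') * (τ * q') := ⟨_, rfl⟩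
  obtain ⟨d, hd⟩ : ∃ d, d = -(s * p + (s * l + σ * s') * (τ * p')) := ⟨_, rfl⟩
  obtain ⟨e, he⟩ : ∃ e, e = τ * (q' * ξ - p') := ⟨_, rfl⟩
  have heD : e * D = 1 := by rw [he]; linear_combination τ * hDe + hτ
  have he0 : 0 < e := by
    by_contra h
    nlinarith
  have heq : e * q ≤ 1 := by nlinarith
  have hL' : s * (t * l + σ * t') = t * (s * l + σ * s') - 1 := by
    linear_combination -σ * hdy - hσ
  have hL : s * l + σ * s' = (r - s * (q * ξ - p)) * D + δ := by rw [hδ]; ring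
  have hqe : q * e - τ * q' * (q * ξ - p) = 1 := by
    rw [he]; linear_combination τ * hdx + hτ
  have hpe : p * e - τ * p' * (q * ξ - p) = ξ := by
    rw [he]; linear_combination τ * ξ * hdx + ξ * hτ
  have hc' : c = D * (s * 1 + τ * r * q') + τ * q' * δ := by
    rw [hc, hL]; linear_combination s * D * hqe - s * q * heD
  have hd' : -d = D * (s * ξ + τ * r * p') + τ * p' * δ := by
    rw [hd, hL]; linear_combination s * D * hpe - s * p * heD
  have hsa : s * a = t * c + -(τ * q') := by
    rw [ha, hc]; linear_combination τ * q' * hL'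
  have hsb : s * b = t * d + τ * p' := by
    rw [hb, hd]; linear_combination -τ * p' * hL'
  have hq'abs : |q'| ≤ q' := (abs_of_nonneg (by linarith)).le
  have hcC : |c| ≤ D * (s + |r| * q') + q' * s / 2 := by
    rw [hc']
    exact abs_mul_add_add_le hD0.le (by linarith) hτ1 (by simp) hq'abs hl
  have hdC : |d| ≤ D * (s + |r| * q') + q' * s / 2 := by
    rw [← abs_neg, hd']
    exact abs_mul_add_add_le hD0.le (by linarith) hτ1 hξ hp' hl
  have haC := abs_le_add_of_mul_eq hs ht hcC (w := q')
    (by rwa [abs_neg, abs_mul, hτ1, one_mul]) hsa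
  have hbC := abs_le_add_of_mul_eq hs ht hdC (w := q') (by rwa [abs_mul, hτ1, one_mul]) hsb
  have hC := mul_add_add_le_of_le_add (abs_nonneg r) hq' hqq hs hD'
  have heq' : e ≤ 1 / q := by rwa [le_div_iff₀ hq0]
  have hcξ : c * ξ + d = r + δ * e := by
    rw [hc, hd, hL, he]
    rw [he] at heD
    linear_combination (r - s * (q * ξ - p)) * heD
  have hsnd : c * (ξ * X) + d * X - Y = X * δ * e := by
    rw [hYr]; linear_combination X * hcξ
  have haξ : s * (a * ξ + b) = t * (c * ξ + d) - e := by
    rw [he]; linear_combination ξ * hsa + hsb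
  have hfst : a * (ξ * X) + b * X - η * Y =
      (-(Y * (s * η - t)) + t * (X * δ * e) - X * e) / s := by
    rw [eq_div_iff (by linarith), hYr]
    linear_combination X * haξ + t * X * hcξ
  have hsnd_le : |X * δ * e| ≤ |X| * s / q / 2 := by
    rw [abs_mul, abs_mul, abs_of_pos he0]
    calc |X| * |δ| * e ≤ |X| * (s / 2) * (1 / q) := by gcongr
      _ = |X| * s / q / 2 := by ring
  have hmain : 0 ≤ |X| * s / q := by positivity
  have hYs : 0 ≤ |Y| / (s * s₁) := by positivity
  refine ⟨l, a, b, c, d, ha, hb, hc, hd, ?_, ?_, ?_⟩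
  · refine le_trans ?_ ((le_max_left |c| |d|).trans (le_max_right _ _))
    rw [hrabs]
    exact abs_sub_sub_le_abs hq0.le hD hs (zero_le_one.trans hq') hτ1 hl hc'
  · rw [hrabs]
    refine max_le (max_le ?_ ?_) (max_le ?_ ?_) <;> linarith
  · refine max_le ?_ ?_
    · rw [hfst]
      exact abs_div_le_of_error hs hs₁ hq0 ht hη he0.le heq' hsnd_le
    · rw [hsnd]
      have : 2 * |Y| / (s * s₁) + 5 * |X| * s / q =
        2 * (|Y| / (s * s₁)) + 5 * (|X| * s / q) := by ring
      linarith

/-- Lemma 4: for all `j, k ≥ 1` there is `γ = N_j U^ℓ M_k ∈ SL(2, ℤ)` with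
`| (|y₂|/|x₂|) q_{k-1} q_k - s_j q_k | - 4 s_j q_{k-1} ≤ |γ| ≤ 2 (|y₂|/|x₂|) q_{k-1} q_k + 4 s_j q_k`
and `|γ x - y| ≤ 2|y₂|/(s_j s_{j+1}) + 5 |x₂| s_j / q_k`. -/
theorem stmt13 (x y : Fin 2 → ℝ) (hx2 : x 1 ≠ 0) (hy2 : y 1 ≠ 0)
    (hξ : Irrational (x 0 / x 1)) (hξ1 : |x 0 / x 1| < 1) (hxn : |x 0| ≤ |x 1|)
    (hyirr : Irrational (y 0 / y 1)) (hy1 : |y 0 / y 1| ≤ 1) (hyn : |y 0| ≤ |y 1|)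
    (p q : ℕ → ℤ) (hp : ∀ k, (p k : ℝ) = pnum (x 0 / x 1) k)
    (hq : ∀ k, (q k : ℝ) = qden (x 0 / x 1) k)
    (t s : ℕ → ℤ) (ht : ∀ j, (t j : ℝ) = pnum (y 0 / y 1) j)
    (hs : ∀ j, (s j : ℝ) = qden (y 0 / y 1) j)
    (j k : ℕ) (hj : 1 ≤ j) (hk : 1 ≤ k) :
    ∃ ℓ : ℤ, ∃ γ : Matrix (Fin 2) (Fin 2) ℤ,
      γ = !![t j, (-1) ^ (j - 1) * t (j - 1); s j, (-1) ^ (j - 1) * s (j - 1)] *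
          !![1, ℓ; 0, 1] *
          (if Even k then !![q k, -(p k); -(q (k - 1)), p (k - 1)]
            else !![q k, -(p k); q (k - 1), -(p (k - 1))]) ∧
        |(|y 1| / |x 1|) * (q (k - 1) : ℝ) * (q k : ℝ) - (s j : ℝ) * (q k : ℝ)|
            - 4 * (s j : ℝ) * (q (k - 1) : ℝ) ≤ mnorm γ ∧
        mnorm γ ≤ 2 * (|y 1| / |x 1|) * (q (k - 1) : ℝ) * (q k : ℝ)
            + 4 * (s j : ℝ) * (q k : ℝ) ∧
        vnorm (act γ x - y) ≤ 2 * |y 1| / ((s j : ℝ) * (s (j + 1) : ℝ))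
            + 5 * |x 1| * (s j : ℝ) / (q k : ℝ) := by
  obtain ⟨i, rfl⟩ : ∃ i, j = i + 1 := ⟨j - 1, by omega⟩
  obtain ⟨m, rfl⟩ : ∃ m, k = m + 1 := ⟨k - 1, by omega⟩
  simp only [Nat.add_sub_cancel]
  obtain ⟨D, hD, hD', hDe⟩ := GenContFract.exists_den_mul_sub_num_mul_eq hξ m
  have hdx := GenContFract.of_determinant hξ m
  have hdy := GenContFract.of_determinant hyirr i
  have hη := GenContFract.abs_den_mul_sub_num_mul_le hyirr (i + 1)
  have hq1 := GenContFract.one_le_of_den (x 0 / x 1) m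
  have hqm := GenContFract.of_den_mono (v := x 0 / x 1) (n := m)
  have hs1 := GenContFract.one_le_of_den (y 0 / y 1) (i + 1)
  have hs2 := GenContFract.one_le_of_den (y 0 / y 1) (i + 1 + 1)
  have hpq := abs_num_le_den hξ hξ1.le m (p m) (q m) (hp m) (hq m)
  have hts := abs_num_le_den hyirr hy1 (i + 1) (t (i + 1)) (s (i + 1)) (ht _) (hs _)
  simp only [qden] at hq hs
  simp only [pnum] at hp ht
  simp only [← hq, ← hp] at hD hD' hDe hdx hq1 hqm
  simp only [← hs, ← ht] at hdy hη hs1 hs2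
  have hsq (n : ℕ) : (-1 : ℝ) ^ n * (-1) ^ n = 1 := by rw [← mul_pow]; simp
  obtain ⟨l, a, b, c, d, ha, hb, hc, hd, hlow, hup, happ⟩ :=
    exists_int_approx (Y := y 1) hx2 hq1 hqm hpq hξ1.le hs1 hs2 hts (hsq i) (hsq m) hdx hdy
      hD hD' hDe hη
  refine ⟨l, _, rfl, ?_⟩
  have hM : (if Even (m + 1) then !![q (m + 1), -(p (m + 1)); -(q m), p m]
      else !![q (m + 1), -(p (m + 1)); q m, -(p m)]) =
      !![q (m + 1), -(p (m + 1)); (-1) ^ m * q m, -((-1) ^ m * p m)] := by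
    rcases Nat.even_or_odd m with h | h
    · simp [h, h.neg_one_pow, Nat.even_add_one]
    · simp [h, h.neg_one_pow]
  rw [hM]
  have hγ : (!![t (i + 1), (-1) ^ i * t i; s (i + 1), (-1) ^ i * s i] * !![1, l; 0, 1] *
      !![q (m + 1), -(p (m + 1)); (-1) ^ m * q m, -((-1) ^ m * p m)]).map (Int.cast : ℤ → ℝ) =
      !![a, b; c, d] := by
    rw [ha, hb, hc, hd]
    ext u v
    fin_cases u <;> fin_cases v <;> simp <;> ring
  generalize !![t (i + 1), (-1) ^ i * t i; s (i + 1), (-1) ^ i * s i] * !![1, l; 0, 1] *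
      !![q (m + 1), -(p (m + 1)); (-1) ^ m * q m, -((-1) ^ m * p m)] = γ at hγ ⊢
  have hnorm : mnorm γ = max (max |a| |b|) (max |c| |d|) := by
    have h (u v : Fin 2) : (γ u v : ℝ) = !![a, b; c, d] u v := by rw [← hγ]; rfl
    simp [mnorm, h]
  have hvec : vnorm (act γ x - y) = max |a * (x 0 / x 1 * x 1) + b * x 1 - y 0 / y 1 * y 1|
      |c * (x 0 / x 1 * x 1) + d * x 1 - y 1| := by
    rw [vnorm, act, hγ, div_mul_cancel₀ _ hx2, div_mul_cancel₀ _ hy2]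
    simp [dotProduct, Fin.sum_univ_two]
  rw [hnorm, hvec]
  exact ⟨hlow, hup, happ⟩
end
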